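/- arXiv:1211.0976 — 4 statements merged into one kernel-verified Lean document; each statement's English description precedes it below -/
import Mathlib

section
/- Assume B₀ = k and that the associated graded ring gr(B) is an integral domain which is finitely generated as a k-algebra. Then B and the Rees algebra B̃ are integral domains finitely generated as k-algebras, the principal ideal (s) of B̃ is a prime ideal of height 1 with B̃/(s) ≅ gr(B), and the Krull dimension of B equals the Krull dimension of gr(B). -/
/-!
`B` is a commutative `k`-algebra with an exhaustive increasing filtration
`F : ℤ → Submodule k B` (`F m = 0` for `m < 0`, `B₀ = k·1`), `1 ∈ F 0`,
`Fᵢ·F_j ⊆ F_{i+j}`.  The associated graded ring `gr(B)` is modelled by a commutative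
`k`-algebra `G` together with symbol maps `σ n : F n →ₗ[k] G` whose kernels are
`F (n−1)`, which are multiplicative and unital, and whose ranges decompose `G` as an
internal direct sum (this characterizes `G ≅ gr(B)`).  The Rees algebra `B̃ = ⊕ Bₙ sⁿ`
is modelled as the subalgebra of `B[s] = Polynomial B` of polynomials `f` with
`f.coeff n ∈ F n` for all `n`, and `s` is the image of `Polynomial.X`.
-/

open scoped BigOperators

/-!
Setting `s = 1` identifies `B̃ / (s - 1)` with `B`, and setting `s = 0` identifies `B̃ / (s)` with
`gr B`: the map `f ↦ ∑ₙ σ n (fₙ)` is a surjective homomorphism `B̃ → gr B` with kernel `(s)`.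
Homogeneous lifts of generators of `gr B` together with `s` generate `B̃`, by induction on the
degree. Both `s` and `s - 1` are nonzero in the affine domain `B̃`, so that
`dim B + 1 ≤ dim B̃ ≤ dim B[X] = dim B + 1`, whereas `dim gr B + 1 = dim B̃` because `s` is prime:
by Noether normalization `B̃` is integral over a polynomial ring `P`, where `(s) ∩ P = (p)` for a
prime `p`, and the variables other than one occurring in `p` stay algebraically independent
modulo `p`.
-/

/-! ### Krull dimension of affine domains -/

section KrullDimension

theorem ringKrullDim_eq_of_isIntegral (R S : Type*) [CommRing R] [CommRing S] [Algebra R S]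
    [Algebra.IsIntegral R S] [FaithfulSMul R S] : ringKrullDim S = ringKrullDim R := by
  apply le_antisymm
  · refine Order.krullDim_le_of_strictMono (PrimeSpectrum.comap (algebraMap R S)) fun p q hpq => ?_
    exact Ideal.IsIntegral.comap_lt_comap (I := p.asIdeal) (J := q.asIdeal) hpq
  · refine iSup_le fun l => ?_
    obtain ⟨Q, _, _⟩ := Ideal.nonempty_primesOver (S := S) l.head.asIdeal
    obtain ⟨L, hL, -⟩ := Ideal.exists_ltSeries_of_hasGoingUp l Q
    exact hL ▸ Order.LTSeries.length_le_krullDim L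

theorem exists_isIntegral_mvPolynomial_trdeg (k A : Type*) [Field k] [CommRing A] [IsDomain A]
    [Algebra k A] [Algebra.FiniteType k A] :
    ∃ (n : ℕ) (_ : Algebra (MvPolynomial (Fin n) k) A),
      IsScalarTower k (MvPolynomial (Fin n) k) A ∧ FaithfulSMul (MvPolynomial (Fin n) k) A ∧
      Algebra.IsIntegral (MvPolynomial (Fin n) k) A ∧ Algebra.trdeg k A = n := by
  obtain ⟨n, g, hg, hint⟩ := exists_integral_inj_algHom_of_fg k A
  algebraize [g.toRingHom]
  have htower : IsScalarTower k (MvPolynomial (Fin n) k) A :=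
    .of_algebraMap_eq fun c => (g.commutes c).symm
  have hfaithful : FaithfulSMul (MvPolynomial (Fin n) k) A :=
    (faithfulSMul_iff_algebraMap_injective _ _).2 hg
  have hintegral : Algebra.IsIntegral (MvPolynomial (Fin n) k) A := ⟨hint⟩
  refine ⟨n, _, htower, hfaithful, hintegral, ?_⟩
  have := lift_trdeg_add_eq k (MvPolynomial (Fin n) k) A
  rw [trdeg_eq_zero (R := MvPolynomial (Fin n) k) (A := A),
    MvPolynomial.trdeg_of_isDomain] at this
  simpa using this.symm

theorem ringKrullDim_eq_toENat_trdeg (k A : Type*) [Field k] [CommRing A] [IsDomain A]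
    [Algebra k A] [Algebra.FiniteType k A] :
    ringKrullDim A = Cardinal.toENat (Algebra.trdeg k A) := by
  obtain ⟨n, _, _, _, _, htrdeg⟩ := exists_isIntegral_mvPolynomial_trdeg k A
  rw [ringKrullDim_eq_of_isIntegral (MvPolynomial (Fin n) k) A, htrdeg]
  simp

theorem ringKrullDim_le_of_injective {k A A' : Type*} [Field k] [CommRing A] [IsDomain A]
    [Algebra k A] [Algebra.FiniteType k A] [CommRing A'] [IsDomain A'] [Algebra k A']
    [Algebra.FiniteType k A'] (f : A →ₐ[k] A') (hf : Function.Injective f) :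
    ringKrullDim A ≤ ringKrullDim A' := by
  have := Cardinal.toENat.monotone' (lift_trdeg_le_of_injective f hf)
  simpa [ringKrullDim_eq_toENat_trdeg k] using this

open Polynomial in
theorem exists_minpoly_coeff_zero_dvd_pow {R A : Type*} [CommRing R] [IsDomain R]
    [IsIntegrallyClosed R] [CommRing A] [IsDomain A] [Algebra R A] [Algebra.IsIntegral R A]
    [FaithfulSMul R A] {s : A} {r : R} (h : s ∣ algebraMap R A r) :
    ∃ m : ℕ, (minpoly R s).coeff 0 ∣ r ^ m := by
  obtain ⟨a, ha⟩ := h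
  set q := minpoly R a with hq
  set d := q.natDegree with hd
  -- If `r = s a` and `q` is the minimal polynomial of `a`, of degree `d`, then `s` is a root of
  -- `p = ∑ qᵢ rⁱ X ^ (d - i)`, as `p(s) = s ^ d q(a)`; and `p` has constant coefficient `r ^ d`.
  let p : R[X] := ∑ i ∈ Finset.range (d + 1), monomial (d - i) (q.coeff i * r ^ i)
  have hp : aeval s p = 0 := calc
    aeval s p = ∑ i ∈ Finset.range (d + 1), s ^ d * (algebraMap R A (q.coeff i) * a ^ i) := by
      rw [map_sum]
      refine Finset.sum_congr rfl fun i hi => ?_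
      rw [aeval_monomial, map_mul, map_pow, ha,
        ← Nat.sub_add_cancel (Finset.mem_range_succ_iff.1 hi), pow_add]
      simp only [Nat.add_sub_cancel]
      ring
    _ = 0 := by
      simp_rw [← Finset.mul_sum, ← Algebra.smul_def, hd, ← aeval_eq_sum_range, hq, minpoly.aeval,
        mul_zero]
  have hp0 : p.coeff 0 = r ^ d := by
    rw [finsetSum_coeff, Finset.sum_range_succ, Finset.sum_eq_zero fun i hi => ?_]
    · rw [zero_add, Nat.sub_self, coeff_monomial_same, hd, hq,
        (minpoly.monic (Algebra.IsIntegral.isIntegral a)).coeff_natDegree, one_mul]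
    · exact coeff_monomial_of_ne _ (Nat.sub_pos_of_lt (Finset.mem_range.1 hi)).ne
  refine ⟨d, hp0 ▸ ?_⟩
  obtain ⟨u, hu⟩ := minpoly.isIntegrallyClosed_dvd (Algebra.IsIntegral.isIntegral s) hp
  exact ⟨u.coeff 0, by rw [hu, mul_coeff_zero]⟩

open Polynomial in
theorem dvd_algebraMap_minpoly_coeff_zero {R A : Type*} [CommRing R] [CommRing A] [Algebra R A]
    (s : A) : s ∣ algebraMap R A ((minpoly R s).coeff 0) := by
  have h := minpoly.aeval R s
  rw [← X_mul_divX_add (minpoly R s), map_add, map_mul, aeval_X, aeval_C] at h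
  exact (dvd_add_right (dvd_mul_right _ _)).1 (h ▸ dvd_zero s)

-- The constant coefficient of `minpoly R s` plays the role of the norm of `s`: it lies in the
-- contraction of `(s)` and divides a power of each element of it.
theorem exists_prime_comap_span_singleton_eq {R A : Type*} [CommRing R] [IsDomain R]
    [UniqueFactorizationMonoid R] [CommRing A] [IsDomain A] [Algebra R A] [Algebra.IsIntegral R A]
    [FaithfulSMul R A] {s : A} (hs : Prime s) :
    ∃ p : R, Prime p ∧ (Ideal.span {s}).comap (algebraMap R A) = Ideal.span {p} := by
  set P := (Ideal.span {s}).comap (algebraMap R A)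
  have hmem : ∀ r : R, r ∈ P ↔ s ∣ algebraMap R A r := fun r => Ideal.mem_span_singleton
  have hprime : (Ideal.span {s}).IsPrime := (Ideal.span_singleton_prime hs.ne_zero).2 hs
  set c := (minpoly R s).coeff 0
  have hcP : c ∈ P := (hmem c).2 (dvd_algebraMap_minpoly_coeff_zero s)
  have hPbot : P ≠ ⊥ := Ideal.comap_ne_bot_of_integral_mem hs.ne_zero
    (Ideal.mem_span_singleton_self s) (Algebra.IsIntegral.isIntegral s)
  have hPprime : P.IsPrime := Ideal.comap_isPrime _ _
  obtain ⟨p, hpP, hp⟩ := hPprime.exists_mem_prime_of_ne_bot hPbot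
  have hpc : p ∣ c := by
    obtain ⟨m, hm⟩ := exists_minpoly_coeff_zero_dvd_pow ((hmem p).1 hpP)
    obtain ⟨i, -, hi⟩ := (dvd_prime_pow hp m).1 hm
    have hi0 : i ≠ 0 := by
      rintro rfl
      rw [pow_zero, associated_one_iff_isUnit] at hi
      exact hPprime.ne_top (P.eq_top_of_isUnit_mem hcP hi)
    exact (dvd_pow_self p hi0).trans hi.symm.dvd
  refine ⟨p, hp, le_antisymm (fun r hr => ?_) ((Ideal.span_singleton_le_iff_mem P).2 hpP)⟩
  obtain ⟨m, hm⟩ := exists_minpoly_coeff_zero_dvd_pow ((hmem r).1 hr)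
  exact Ideal.mem_span_singleton.2 (hp.dvd_of_dvd_pow (hpc.trans hm))

open MvPolynomial in
theorem algebraicIndependent_quotient_span_singleton {ι k : Type*} [CommRing k] [IsDomain k]
    {p : MvPolynomial ι k} {i : ι} (hi : p.degreeOf i ≠ 0) :
    AlgebraicIndependent k
      fun j : {j : ι // j ≠ i} => Ideal.Quotient.mkₐ k (Ideal.span {p}) (X (j : ι)) := by
  rw [algebraicIndependent_iff]
  intro q hq
  rw [← comp_aeval_apply, ← Function.comp_def X, ← rename_eq_aeval, Ideal.Quotient.mkₐ_eq_mk,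
    Ideal.Quotient.eq_zero_iff_mem, Ideal.mem_span_singleton] at hq
  obtain ⟨h, hh⟩ := hq
  have hdeg : (rename Subtype.val q).degreeOf i = 0 := by
    classical
    by_contra hne
    obtain ⟨j, -, hj⟩ := Finset.mem_image.1 (vars_rename _ _ (mem_vars_iff_degreeOf_ne_zero.2 hne))
    exact j.2 hj
  have hh0 : h = 0 := by
    by_contra hne
    rw [hh, degreeOf_mul_eq (ne_zero_of_degreeOf_ne_zero hi) hne] at hdeg
    exact hi (Nat.eq_zero_of_add_eq_zero_right hdeg)
  exact rename_injective _ Subtype.val_injective (by rw [hh, hh0, mul_zero, map_zero])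

open MvPolynomial in
theorem exists_degreeOf_ne_zero_of_prime {ι k : Type*} [Field k] {p : MvPolynomial ι k}
    (hp : Prime p) : ∃ i, p.degreeOf i ≠ 0 := by
  by_contra! h
  have hvars : p.vars = ∅ := Finset.eq_empty_of_forall_notMem fun i hi =>
    mem_vars_iff_degreeOf_ne_zero.1 hi (h i)
  have hc := vars_eq_empty_iff_eq_C.1 hvars
  have hc0 : p.coeff 0 ≠ 0 := fun h0 => hp.ne_zero (by rw [hc, h0, C_0])
  exact hp.not_isUnit (hc ▸ hc0.isUnit.map C)

theorem natCard_le_toENat_trdeg_quotient_span_singleton_add_one {ι k : Type*} [Field k] [Finite ι]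
    {p : MvPolynomial ι k} (hp : Prime p) :
    (Nat.card ι : ℕ∞) ≤
      Cardinal.toENat (Algebra.trdeg k (MvPolynomial ι k ⧸ Ideal.span {p})) + 1 := by
  obtain ⟨i, hi⟩ := exists_degreeOf_ne_zero_of_prime hp
  have hle := Cardinal.toENat.monotone'
    (algebraicIndependent_quotient_span_singleton hi).lift_cardinalMk_le_trdeg
  have hcard : Nat.card ι = Nat.card {j // j ≠ i} + 1 := by
    classical rw [← Nat.card_congr (Equiv.optionSubtypeNe i), Finite.card_option]
  rw [hcard, Nat.cast_add_one]
  gcongr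
  rw [← ENat.card_eq_coe_natCard]
  simpa [ENat.card] using hle

theorem ringKrullDim_quotient_span_singleton_add_one_of_prime (k : Type*) {A : Type*} [Field k]
    [CommRing A] [IsDomain A] [Algebra k A] [Algebra.FiniteType k A] {s : A} (hs : Prime s) :
    ringKrullDim (A ⧸ Ideal.span {s}) + 1 = ringKrullDim A := by
  refine le_antisymm (ringKrullDim_quotient_succ_le_of_nonZeroDivisor
    (mem_nonZeroDivisors_of_ne_zero hs.ne_zero)) ?_
  obtain ⟨n, _, _, _, _, htrdeg⟩ := exists_isIntegral_mvPolynomial_trdeg k A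
  obtain ⟨p, hp, hcomap⟩ := exists_prime_comap_span_singleton_eq (R := MvPolynomial (Fin n) k) hs
  have : (Ideal.span {s}).LiesOver (Ideal.span {p}) := ⟨hcomap.symm⟩
  have : (Ideal.span {p}).IsPrime := (Ideal.span_singleton_prime hp.ne_zero).2 hp
  have hcard := natCard_le_toENat_trdeg_quotient_span_singleton_add_one hp
  rw [Nat.card_fin] at hcard
  rw [ringKrullDim_eq_of_isIntegral (MvPolynomial (Fin n) k ⧸ Ideal.span {p}) (A ⧸ Ideal.span {s}),
    ringKrullDim_eq_toENat_trdeg k A, ringKrullDim_eq_toENat_trdeg k, htrdeg, map_natCast]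
  exact_mod_cast hcard

theorem not_exists_isPrime_lt_lt_of_isPrincipal {R : Type*} [CommRing R] [IsNoetherianRing R]
    (I : Ideal R) [I.IsPrincipal] [I.IsPrime] :
    ¬∃ q₁ q₂ : Ideal R, q₁.IsPrime ∧ q₂.IsPrime ∧ q₁ < q₂ ∧ q₂ < I := by
  rintro ⟨q₁, q₂, _, _, h₁₂, h₂⟩
  have hI : I.height ≤ 1 := Ideal.height_le_one_of_isPrincipal_of_mem_minimalPrimes I I
    (by rw [Ideal.minimalPrimes_eq_subsingleton_self]; rfl)
  have hle : (1 : ℕ∞) + 1 ≤ 1 := calc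
    (1 : ℕ∞) + 1 ≤ q₁.height + 1 + 1 := by gcongr; exact le_add_self
    _ ≤ q₂.height + 1 := by
      gcongr; exact Ideal.height_add_one_le_of_lt_of_isPrime h₁₂
    _ ≤ I.height := Ideal.height_add_one_le_of_lt_of_isPrime h₂
    _ ≤ 1 := hI
  exact absurd hle (by decide)

end KrullDimension

/-! ### Rees algebra and associated graded algebra -/

section ReesAlgebra

open Polynomial hiding monomial coeff

variable {R B G : Type*} [CommRing R] [CommRing B] [Algebra R B] [CommRing G] [Algebra R G]
  {F : ℤ → Submodule R B}

variable (F) in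
/-- The Rees algebra of a filtered algebra, as a subalgebra of `B[X]` (the analogue of Mathlib's
`reesAlgebra` of an ideal). Only the pieces `F n` with `0 ≤ n` enter. -/
def filteredReesAlgebra [SetLike.GradedMonoid F] : Subalgebra R B[X] where
  carrier := {f | ∀ n : ℕ, f.coeff n ∈ F n}
  mul_mem' {f g} hf hg n := by
    rw [coeff_mul]
    refine sum_mem fun p hp => ?_
    rw [← Finset.HasAntidiagonal.mem_antidiagonal.1 hp, Nat.cast_add]
    exact SetLike.mul_mem_graded (hf p.1) (hg p.2)
  add_mem' {f g} hf hg n := by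
    rw [coeff_add]
    exact add_mem (hf n) (hg n)
  algebraMap_mem' r n := by
    rw [Polynomial.algebraMap_apply, coeff_C]
    split_ifs with hn
    · subst hn
      exact SetLike.algebraMap_mem_graded F r
    · exact zero_mem _

namespace filteredReesAlgebra

variable [SetLike.GradedMonoid F]

variable (F) in
/-- The homogeneous element `b sⁿ` of the Rees algebra, for `b` in `F n`. -/
noncomputable def monomial (n : ℕ) : F n →ₗ[R] filteredReesAlgebra F :=
  LinearMap.codRestrict (Subalgebra.toSubmodule (filteredReesAlgebra F))
    ((Polynomial.monomial n).restrictScalars R ∘ₗ (F n).subtype) fun b m => by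
      change (Polynomial.monomial n (b : B)).coeff m ∈ F m
      rw [coeff_monomial]
      split_ifs with h
      · exact h ▸ b.2
      · exact zero_mem _

theorem coe_monomial (n : ℕ) (b : F n) :
    (monomial F n b : B[X]) = Polynomial.monomial n (b : B) :=
  rfl

variable (F) in
/-- The `n`-th coefficient of an element of the Rees algebra, as an element of `F n`. -/
noncomputable def coeff (n : ℕ) : filteredReesAlgebra F →ₗ[R] F n :=
  LinearMap.codRestrict (F n)
    ((lcoeff B n).restrictScalars R ∘ₗ (filteredReesAlgebra F).val.toLinearMap) fun f => f.2 n

theorem sum_support_monomial_coeff (f : filteredReesAlgebra F) :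
    ∑ n ∈ (f : B[X]).support, monomial F n (coeff F n f) = f := by
  refine Subtype.ext ?_
  rw [AddSubmonoidClass.coe_finsetSum]
  exact (as_sum_support _).symm

theorem induction {motive : filteredReesAlgebra F → Prop} (f : filteredReesAlgebra F)
    (monomial : ∀ (n : ℕ) (b : F n), motive (monomial F n b))
    (add : ∀ f g, motive f → motive g → motive (f + g)) : motive f := by
  rw [← sum_support_monomial_coeff f]
  refine Finset.sum_induction _ motive add ?_ fun n _ => monomial n _
  exact map_zero (filteredReesAlgebra.monomial F 0) ▸ monomial 0 0

/-- The canonical element `s` of degree one, given by `1 ∈ F 0 ≤ F 1`. -/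
noncomputable def s (hF : Monotone F) : filteredReesAlgebra F :=
  monomial F 1 ⟨1, hF (by simp) (SetLike.one_mem_graded F)⟩

theorem coe_s (hF : Monotone F) : (s hF : B[X]) = X :=
  rfl

theorem s_ne_zero [Nontrivial B] (hF : Monotone F) : s hF ≠ 0 := fun h =>
  X_ne_zero (congrArg Subtype.val h)

variable (F) in
/-- The specialization `s = 1`, which recovers the filtered algebra from its Rees algebra. -/
noncomputable def evalOne : filteredReesAlgebra F →ₐ[R] B :=
  ((aeval (1 : B)).restrictScalars R).comp (filteredReesAlgebra F).val

theorem evalOne_monomial (n : ℕ) (b : F n) : evalOne F (monomial F n b) = b := by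
  simp [evalOne, coe_monomial]

theorem evalOne_surjective (hF : Monotone F) (hexh : ∀ b, ∃ n, b ∈ F n) :
    Function.Surjective (evalOne F) := fun b => by
  obtain ⟨n, hn⟩ := hexh b
  exact ⟨_, evalOne_monomial n.toNat ⟨b, hF n.self_le_toNat hn⟩⟩

end filteredReesAlgebra

/-- `G`, with the symbol maps `σ n : F n → G`, is an associated graded algebra of the filtration
`F`: it is the internal direct sum of the images of the `σ n`, which identify with the quotients
`F n / F (n - 1)`. -/
structure IsAssociatedGraded (F : ℤ → Submodule R B) (σ : ∀ n, F n →ₗ[R] G) : Prop where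
  apply_eq_zero_iff : ∀ (n : ℤ) (x : F n), σ n x = 0 ↔ (x : B) ∈ F (n - 1)
  apply_eq_mul : ∀ (i j : ℤ) (a : F i) (b : F j) (c : F (i + j)),
    (c : B) = (a : B) * (b : B) → σ (i + j) c = σ i a * σ j b
  apply_eq_one : ∀ o : F 0, (o : B) = 1 → σ 0 o = 1
  isInternal : DirectSum.IsInternal fun n : ℤ => LinearMap.range (σ n)

theorem monomial_coeff_mem_adjoin {W : Set B[X]}
    (hW : ∀ w ∈ W, ∃ n b, w = Polynomial.monomial n b) {f : B[X]} (hf : f ∈ Algebra.adjoin R W)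
    (n : ℕ) : Polynomial.monomial n (f.coeff n) ∈ Algebra.adjoin R W := by
  induction hf using Algebra.adjoin_induction generalizing n with
  | mem w hw =>
    obtain ⟨m, b, rfl⟩ := hW w hw
    rw [coeff_monomial]
    split_ifs with h
    · subst h
      exact Algebra.subset_adjoin hw
    · exact map_zero (Polynomial.monomial (R := B) n) ▸ zero_mem _
  | algebraMap r =>
    rw [Polynomial.algebraMap_apply, coeff_C]
    split_ifs with h
    · subst h
      exact Subalgebra.algebraMap_mem _ r
    · exact map_zero (Polynomial.monomial (R := B) n) ▸ zero_mem _
  | add f g _ _ hf hg =>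
    rw [coeff_add, map_add]
    exact add_mem (hf n) (hg n)
  | mul f g _ _ hf hg =>
    rw [coeff_mul, map_sum]
    refine sum_mem fun p hp => ?_
    rw [← Finset.HasAntidiagonal.mem_antidiagonal.1 hp, ← monomial_mul_monomial]
    exact mul_mem (hf _) (hg _)

namespace IsAssociatedGraded

variable {σ : ∀ n, F n →ₗ[R] G}

theorem apply_mul_of_eq_add (hσ : IsAssociatedGraded F σ) {i j l : ℤ} (hl : l = i + j)
    {a : F i} {b : F j} {c : F l} (hc : (c : B) = (a : B) * (b : B)) :
    σ l c = σ i a * σ j b := by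
  subst hl
  exact hσ.apply_eq_mul i j a b c hc

theorem nontrivial [SetLike.GradedMonoid F] [Nontrivial G] (hσ : IsAssociatedGraded F σ) :
    Nontrivial B := by
  refine ⟨0, 1, fun h01 => ?_⟩
  have h := hσ.apply_eq_one ⟨1, SetLike.one_mem_graded F⟩ rfl
  have h1 : (1 : B) ∈ F (0 - 1) := h01 ▸ zero_mem _
  rw [(hσ.apply_eq_zero_iff 0 _).2 h1] at h
  exact zero_ne_one h

theorem isDomain [SetLike.GradedMonoid F] [IsDomain G] (hσ : IsAssociatedGraded F σ)
    (hneg : ∀ n < 0, F n = ⊥) (hexh : ∀ b, ∃ n, b ∈ F n) : IsDomain B := by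
  have hord : ∀ a : B, a ≠ 0 → ∃ (n : ℤ) (a' : F n), (a' : B) = a ∧ σ n a' ≠ 0 := by
    intro a ha
    have hbdd : ∀ n : ℤ, a ∈ F n → 0 ≤ n := fun n hn => by
      by_contra! hlt
      exact ha (by simpa [hneg n hlt] using hn)
    obtain ⟨n, hn, hmin⟩ := Int.exists_least_of_bdd ⟨0, hbdd⟩ (hexh a)
    refine ⟨n, ⟨a, hn⟩, rfl, fun h => ?_⟩
    have := hmin _ ((hσ.apply_eq_zero_iff n _).1 h)
    lia
  have := hσ.nontrivial
  have : NoZeroDivisors B := ⟨fun {a b} hab => by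
    by_contra! hne
    obtain ⟨i, a', rfl, ha⟩ := hord a hne.1
    obtain ⟨j, b', rfl, hb⟩ := hord b hne.2
    refine mul_ne_zero ha hb ?_
    rw [← hσ.apply_eq_mul i j a' b' 0 hab.symm, map_zero]⟩
  exact NoZeroDivisors.to_isDomain B

open filteredReesAlgebra

variable [SetLike.GradedMonoid F]

theorem sum_support_apply_coeff (σ : ∀ n, F n →ₗ[R] G) (f : filteredReesAlgebra F) {t : Finset ℕ}
    (ht : (f : B[X]).support ⊆ t) :
    ∑ n ∈ (f : B[X]).support, σ n (coeff F n f) = ∑ n ∈ t, σ n (coeff F n f) := by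
  refine Finset.sum_subset ht fun n _ hn => ?_
  have hcoeff : coeff F n f = 0 := Subtype.ext (notMem_support_iff.1 hn)
  rw [hcoeff, map_zero]

/-- The linear map underlying `IsAssociatedGraded.symbolHom`. -/
noncomputable def symbolLinearMap (σ : ∀ n, F n →ₗ[R] G) : filteredReesAlgebra F →ₗ[R] G where
  toFun f := ∑ n ∈ (f : B[X]).support, σ n (coeff F n f)
  map_add' f g := by
    classical
    rw [sum_support_apply_coeff σ f Finset.subset_union_left,
      sum_support_apply_coeff σ g Finset.subset_union_right,
      sum_support_apply_coeff σ (f + g) support_add, ← Finset.sum_add_distrib]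
    simp only [map_add]
  map_smul' r f := by
    rw [sum_support_apply_coeff σ (r • f) (support_smul r (f : B[X])), RingHom.id_apply,
      Finset.smul_sum]
    simp only [map_smul]

theorem symbolLinearMap_monomial (n : ℕ) (b : F n) :
    symbolLinearMap σ (monomial F n b) = σ n b := by
  have hcoeff : coeff F n (monomial F n b) = b := Subtype.ext (coeff_monomial_same n (b : B))
  change ∑ m ∈ _, _ = _
  rw [sum_support_apply_coeff σ _ (support_monomial_subset n (b : B)), Finset.sum_singleton, hcoeff]

theorem symbolLinearMap_mul (hσ : IsAssociatedGraded F σ) (f g : filteredReesAlgebra F) :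
    symbolLinearMap σ (f * g) = symbolLinearMap σ f * symbolLinearMap σ g := by
  induction f using filteredReesAlgebra.induction with
  | add f₁ f₂ h₁ h₂ => rw [add_mul, map_add, h₁, h₂, map_add, add_mul]
  | monomial m a =>
    induction g using filteredReesAlgebra.induction with
    | add g₁ g₂ h₁ h₂ => rw [mul_add, map_add, h₁, h₂, map_add, mul_add]
    | monomial n b =>
      have hab : (a * b : B) ∈ F (m + n : ℕ) := by
        rw [Nat.cast_add]
        exact SetLike.mul_mem_graded a.2 b.2
      have hmul : monomial F m a * monomial F n b = monomial F (m + n) ⟨a * b, hab⟩ :=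
        Subtype.ext (monomial_mul_monomial m n (a : B) b)
      rw [hmul, symbolLinearMap_monomial, symbolLinearMap_monomial, symbolLinearMap_monomial,
        hσ.apply_mul_of_eq_add (Nat.cast_add m n) rfl]

/-- The canonical homomorphism from the Rees algebra to the associated graded algebra, sending
`b sⁿ` to the symbol of `b` in degree `n`. -/
noncomputable def symbolHom (hσ : IsAssociatedGraded F σ) : filteredReesAlgebra F →ₐ[R] G :=
  AlgHom.ofLinearMap (symbolLinearMap σ)
    ((symbolLinearMap_monomial 0 ⟨1, SetLike.one_mem_graded F⟩).trans (hσ.apply_eq_one _ rfl))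
    hσ.symbolLinearMap_mul

theorem symbolHom_monomial (hσ : IsAssociatedGraded F σ) (n : ℕ) (b : F n) :
    hσ.symbolHom (monomial F n b) = σ n b :=
  symbolLinearMap_monomial n b

theorem symbolHom_eq_zero_iff (hσ : IsAssociatedGraded F σ) (f : filteredReesAlgebra F) :
    hσ.symbolHom f = 0 ↔ ∀ n : ℕ, (f : B[X]).coeff n ∈ F (n - 1) := by
  have hterm : ∀ n : ℕ, σ n (coeff F n f) = 0 ↔ (f : B[X]).coeff n ∈ F (n - 1) := fun n =>
    hσ.apply_eq_zero_iff n _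
  refine ⟨fun hf n => (hterm n).1 ?_, fun hf => Finset.sum_eq_zero fun n _ => (hterm n).2 (hf n)⟩
  have hindep : iSupIndep fun n : ℕ => LinearMap.range (σ n) :=
    hσ.isInternal.submodule_iSupIndep.comp Nat.cast_injective
  by_cases hn : n ∈ (f : B[X]).support
  · exact (iSupIndep_iff_finsetSum_eq_zero_imp_eq_zero _).1 hindep _
      (fun n : ℕ => σ n (coeff F n f)) (fun n _ => LinearMap.mem_range_self _ _) hf n hn
  · exact (hterm n).2 (notMem_support_iff.1 hn ▸ zero_mem _)

theorem symbolHom_surjective (hσ : IsAssociatedGraded F σ) (hneg : ∀ n < 0, F n = ⊥) :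
    Function.Surjective hσ.symbolHom := by
  rw [← AlgHom.range_eq_top, ← Algebra.toSubmodule_eq_top, eq_top_iff,
    ← hσ.isInternal.submodule_iSup_eq_top, iSup_le_iff]
  rintro n _ ⟨x, rfl⟩
  obtain hn | hn := lt_or_ge n 0
  · have hx : (x : B) = 0 := by simpa [hneg n hn] using x.2
    rw [(hσ.apply_eq_zero_iff n x).2 (hx ▸ zero_mem _)]
    exact zero_mem _
  · lift n to ℕ using hn
    exact ⟨monomial F n x, hσ.symbolHom_monomial n x⟩

theorem ker_symbolHom (hσ : IsAssociatedGraded F σ) (hneg : ∀ n < 0, F n = ⊥)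
    (hmono : Monotone F) : RingHom.ker hσ.symbolHom = Ideal.span {s hmono} := by
  ext f
  rw [RingHom.mem_ker, Ideal.mem_span_singleton, symbolHom_eq_zero_iff]
  constructor
  · intro hf
    have hf0 : (f : B[X]).coeff 0 = 0 := by simpa [hneg] using hf 0
    have hdivX : (f : B[X]).divX ∈ filteredReesAlgebra F := fun n => by
      simpa [coeff_divX] using hf (n + 1)
    refine ⟨⟨_, hdivX⟩, Subtype.ext ?_⟩
    have h := X_mul_divX_add (f : B[X])
    rw [hf0, C_0, add_zero] at h
    exact h.symm
  · rintro ⟨g, rfl⟩ n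
    rw [MulMemClass.coe_mul, coe_s]
    cases n with
    | zero => rw [coeff_X_mul_zero]; exact zero_mem _
    | succ n => rw [coeff_X_mul, Nat.cast_succ, add_sub_cancel_right]; exact g.2 n

/-- The quotient of the Rees algebra by `s` is the associated graded algebra. -/
noncomputable def quotientEquiv (hσ : IsAssociatedGraded F σ) (hneg : ∀ n < 0, F n = ⊥)
    (hmono : Monotone F) : (filteredReesAlgebra F ⧸ Ideal.span {s hmono}) ≃ₐ[R] G :=
  (Ideal.quotientEquivAlgOfEq R (hσ.ker_symbolHom hneg hmono).symm).trans
    (Ideal.quotientKerAlgEquivOfSurjective (hσ.symbolHom_surjective hneg))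

theorem prime_s [IsDomain G] (hσ : IsAssociatedGraded F σ) (hneg : ∀ n < 0, F n = ⊥)
    (hmono : Monotone F) : Prime (s hmono) := by
  have := hσ.nontrivial
  rw [← Ideal.span_singleton_prime (s_ne_zero hmono), ← hσ.ker_symbolHom hneg hmono]
  exact RingHom.ker_isPrime _

theorem le_of_map_comap_eq_top (hσ : IsAssociatedGraded F σ) (hneg : ∀ n < 0, F n = ⊥)
    {S : Subalgebra R B[X]} (hX : X ∈ S)
    (hS : ∀ f ∈ S, ∀ n, Polynomial.monomial n (f.coeff n) ∈ S)
    (htop : (S.comap (filteredReesAlgebra F).val).map hσ.symbolHom = ⊤) :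
    filteredReesAlgebra F ≤ S := by
  have hlift : ∀ (n : ℕ) (b : F n), ∃ b' : B, Polynomial.monomial n b' ∈ S ∧ (b' - b : B) ∈
      F (n - 1) := fun n b => by
    obtain ⟨f, hfS, hf⟩ : hσ.symbolHom (monomial F n b) ∈
      (S.comap (filteredReesAlgebra F).val).map hσ.symbolHom := htop ▸ Algebra.mem_top
    refine ⟨_, hS _ hfS n, ?_⟩
    have hsub : hσ.symbolHom (f - monomial F n b) = 0 := by rw [map_sub, sub_eq_zero]; exact hf
    simpa [filteredReesAlgebra.coe_monomial] using (hσ.symbolHom_eq_zero_iff _).1 hsub n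
  have hmonomial : ∀ (n : ℕ) (b : F n), Polynomial.monomial n (b : B) ∈ S := by
    intro n
    induction n with
    | zero =>
      intro b
      obtain ⟨b', hb', hsub⟩ := hlift 0 b
      have hbb' : b' = b := by simpa [hneg, sub_eq_zero] using hsub
      exact hbb' ▸ hb'
    | succ n ih =>
      intro b
      obtain ⟨b', hb', hsub⟩ := hlift (n + 1) b
      have hdiff : b' - b ∈ F n := by simpa using hsub
      have hmul := mul_mem (ih ⟨_, hdiff⟩) hX
      rw [monomial_mul_X] at hmul
      simpa using sub_mem hb' hmul
  intro f hf
  rw [as_sum_support f]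
  exact sum_mem fun n _ => hmonomial n ⟨_, hf n⟩

theorem finiteType_filteredReesAlgebra (hσ : IsAssociatedGraded F σ) (hneg : ∀ n < 0, F n = ⊥)
    (hmono : Monotone F) [Algebra.FiniteType R G] :
    Algebra.FiniteType R (filteredReesAlgebra F) := by
  classical
  obtain ⟨T, hT⟩ := Algebra.FiniteType.out (R := R) (A := G)
  choose lift hlift using hσ.symbolHom_surjective hneg
  let components (f : filteredReesAlgebra F) : Finset B[X] :=
    (f : B[X]).support.image fun n => monomial F n (coeff F n f)
  let W : Finset B[X] := insert X (T.biUnion fun t => components (lift t))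
  have hXW : X ∈ W := Finset.mem_insert_self _ _
  have hW : ∀ w ∈ W, w ∈ filteredReesAlgebra F ∧ ∃ n b, w = Polynomial.monomial n b := by
    simp only [W, components, Finset.forall_mem_insert, Finset.mem_biUnion, Finset.mem_image]
    refine ⟨⟨(s hmono).2, 1, 1, rfl⟩, ?_⟩
    rintro _ ⟨t, -, n, -, rfl⟩
    exact ⟨(monomial F n _).2, n, _, rfl⟩
  have hlift_mem : ∀ t ∈ T, (lift t : B[X]) ∈ Algebra.adjoin R (W : Set B[X]) := by
    intro t ht
    rw [as_sum_support (lift t : B[X])]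
    refine sum_mem fun n hn => Algebra.subset_adjoin ?_
    exact Finset.mem_insert_of_mem
      (Finset.mem_biUnion.2 ⟨t, ht, Finset.mem_image_of_mem _ hn⟩)
  refine (Subalgebra.fg_iff_finiteType _).1 ⟨W, le_antisymm ?_ ?_⟩
  · exact Algebra.adjoin_le fun w hw => (hW w hw).1
  · refine hσ.le_of_map_comap_eq_top hneg (Algebra.subset_adjoin hXW)
      (fun f hf => monomial_coeff_mem_adjoin (fun w hw => (hW w hw).2) hf) ?_
    rw [eq_top_iff, ← hT]
    exact Algebra.adjoin_le fun t ht => ⟨lift t, hlift_mem t ht, hlift t⟩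

end IsAssociatedGraded

theorem ringKrullDim_filteredReesAlgebra (k : Type*) [Field k] [Algebra k B] [IsDomain B]
    {F : ℤ → Submodule k B} [SetLike.GradedMonoid F] (hmono : Monotone F)
    (hexh : ∀ b, ∃ n, b ∈ F n) [Algebra.FiniteType k (filteredReesAlgebra F)] :
    ringKrullDim (filteredReesAlgebra F) = ringKrullDim B + 1 := by
  have : Algebra.FiniteType k B :=
    .of_surjective _ (filteredReesAlgebra.evalOne_surjective hmono hexh)
  have : IsNoetherianRing B := Algebra.FiniteType.isNoetherianRing k B
  refine le_antisymm ?_ ?_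
  · rw [← Polynomial.ringKrullDim_of_isNoetherianRing]
    exact ringKrullDim_le_of_injective (filteredReesAlgebra F).val Subtype.val_injective
  · have hs : filteredReesAlgebra.s hmono - 1 ≠ 0 := sub_ne_zero.2 fun h =>
      X_ne_C (1 : B) (congrArg Subtype.val h)
    refine ringKrullDim_succ_le_of_surjective (filteredReesAlgebra.evalOne F).toRingHom
      (filteredReesAlgebra.evalOne_surjective hmono hexh) (mem_nonZeroDivisors_of_ne_zero hs) ?_
    change filteredReesAlgebra.evalOne F _ = 0
    rw [map_sub, map_one]
    exact sub_eq_zero.2 (filteredReesAlgebra.evalOne_monomial 1 _)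

theorem IsAssociatedGraded.ringKrullDim_eq {k : Type*} [Field k] [Algebra k B] [Algebra k G]
    [IsDomain G] [Algebra.FiniteType k G] {F : ℤ → Submodule k B} [SetLike.GradedMonoid F]
    {σ : ∀ n, F n →ₗ[k] G} (hσ : IsAssociatedGraded F σ) (hneg : ∀ n < 0, F n = ⊥)
    (hmono : Monotone F) (hexh : ∀ b, ∃ n, b ∈ F n) : ringKrullDim B = ringKrullDim G := by
  have := hσ.isDomain hneg hexh
  have := hσ.finiteType_filteredReesAlgebra hneg hmono
  have hquot : ringKrullDim (filteredReesAlgebra F ⧸ Ideal.span {filteredReesAlgebra.s hmono}) =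
    ringKrullDim G := ringKrullDim_eq_of_ringEquiv (hσ.quotientEquiv hneg hmono).toRingEquiv
  rw [← hquot, ← ENat.WithBot.add_one_cancel, ← ringKrullDim_filteredReesAlgebra k hmono hexh,
    ringKrullDim_quotient_span_singleton_add_one_of_prime k (hσ.prime_s hneg hmono)]

end ReesAlgebra

theorem statement8_general {k B : Type*} [Field k] [CommRing B] [Algebra k B]
    (F : ℤ → Submodule k B)
    (hneg : ∀ m : ℤ, m < 0 → F m = ⊥)
    (hmono : Monotone F)
    (hone : (1 : B) ∈ F 0)
    (hmul : ∀ (i j : ℤ), ∀ a ∈ F i, ∀ b ∈ F j, a * b ∈ F (i + j))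
    (hexh : ∀ x : B, ∃ m : ℤ, x ∈ F m)
    {G : Type*} [CommRing G] [Algebra k G]
    (σ : ∀ n : ℤ, F n →ₗ[k] G)
    (hker : ∀ (n : ℤ) (x : F n), σ n x = 0 ↔ (x : B) ∈ F (n - 1))
    (hσmul : ∀ (i j : ℤ) (a : F i) (b : F j) (c : F (i + j)),
      (c : B) = (a : B) * (b : B) → σ (i + j) c = σ i a * σ j b)
    (hσone : ∀ o : F 0, (o : B) = 1 → σ 0 o = 1)
    (hinternal : DirectSum.IsInternal fun n : ℤ => LinearMap.range (σ n))
    (hGdom : IsDomain G)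
    (hGfg : Algebra.FiniteType k G)
    (Rees : Subalgebra k (Polynomial B))
    (hRees : ∀ f : Polynomial B, f ∈ Rees ↔ ∀ i : ℕ, f.coeff i ∈ F (i : ℤ))
    (sE : Rees) (hsE : (sE : Polynomial B) = Polynomial.X) :
    (IsDomain B ∧ Algebra.FiniteType k B) ∧
    (IsDomain Rees ∧ Algebra.FiniteType k Rees) ∧
    (Ideal.span {sE}).IsPrime ∧
    (∃ q : Ideal Rees, q.IsPrime ∧ q < Ideal.span {sE}) ∧
    (¬ ∃ q₁ q₂ : Ideal Rees, q₁.IsPrime ∧ q₂.IsPrime ∧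
        q₁ < q₂ ∧ q₂ < Ideal.span {sE}) ∧
    Nonempty ((Rees ⧸ Ideal.span {sE}) ≃ₐ[k] G) ∧
    ringKrullDim B = ringKrullDim G := by
  have : SetLike.GradedMonoid F :=
    { one_mem := hone, mul_mem := fun i j _ _ ha hb => hmul i j _ ha _ hb }
  have hσ : IsAssociatedGraded F σ := ⟨hker, hσmul, hσone, hinternal⟩
  obtain rfl : Rees = filteredReesAlgebra F := SetLike.ext hRees
  obtain rfl : sE = filteredReesAlgebra.s hmono := Subtype.ext hsE
  have hB : IsDomain B := hσ.isDomain hneg hexh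
  have hReesFG := hσ.finiteType_filteredReesAlgebra hneg hmono
  have hBFG := Algebra.FiniteType.of_surjective _
    (filteredReesAlgebra.evalOne_surjective hmono hexh)
  have hnoeth := Algebra.FiniteType.isNoetherianRing k (filteredReesAlgebra F)
  have hs := hσ.prime_s hneg hmono
  have hprime := (Ideal.span_singleton_prime hs.ne_zero).2 hs
  have hbot := bot_lt_iff_ne_bot.2 (mt Ideal.span_singleton_eq_bot.1 hs.ne_zero)
  exact ⟨⟨hB, hBFG⟩, ⟨inferInstance, hReesFG⟩, hprime, ⟨⊥, Ideal.isPrime_bot, hbot⟩,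
    not_exists_isPrime_lt_lt_of_isPrincipal _, ⟨hσ.quotientEquiv hneg hmono⟩,
    hσ.ringKrullDim_eq hneg hmono hexh⟩

/-- Assume `B₀ = k` and that `gr(B)` is an integral domain, finitely
generated as a `k`-algebra.  Then `B` and the Rees algebra `B̃` are integral domains,
finitely generated as `k`-algebras; the principal ideal `(s)` of `B̃` is a prime ideal
of height `1` with `B̃/(s) ≅ gr(B)`; and the Krull dimension of `B` equals the Krull
dimension of `gr(B)`. -/
theorem statement8 (k B : Type) [Field k] [CommRing B] [Algebra k B]
    (F : ℤ → Submodule k B)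
    (hneg : ∀ m : ℤ, m < 0 → F m = ⊥)
    (hmono : Monotone F)
    (hone : (1 : B) ∈ F 0)
    (hmul : ∀ (i j : ℤ), ∀ a ∈ F i, ∀ b ∈ F j, a * b ∈ F (i + j))
    (hexh : ∀ x : B, ∃ m : ℤ, x ∈ F m)
    -- `B₀ = k`:
    (hB0 : F 0 = Submodule.span k {(1 : B)})
    -- the associated graded ring `G = gr(B)`, given via symbol maps:
    (G : Type) [CommRing G] [Algebra k G]
    (σ : ∀ n : ℤ, F n →ₗ[k] G)
    (hker : ∀ (n : ℤ) (x : F n), σ n x = 0 ↔ (x : B) ∈ F (n - 1))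
    (hσmul : ∀ (i j : ℤ) (a : F i) (b : F j) (c : F (i + j)),
      (c : B) = (a : B) * (b : B) → σ (i + j) c = σ i a * σ j b)
    (hσone : ∀ o : F 0, (o : B) = 1 → σ 0 o = 1)
    (hinternal : DirectSum.IsInternal fun n : ℤ => LinearMap.range (σ n))
    -- hypotheses: `gr(B)` is a domain, finitely generated as a `k`-algebra:
    (hGdom : IsDomain G)
    (hGfg : Algebra.FiniteType k G)
    -- the Rees algebra `B̃ ⊆ B[s]`, and the element `s ∈ B̃`:
    (Rees : Subalgebra k (Polynomial B))
    (hRees : ∀ f : Polynomial B, f ∈ Rees ↔ ∀ i : ℕ, f.coeff i ∈ F (i : ℤ))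
    (sE : Rees) (hsE : (sE : Polynomial B) = Polynomial.X) :
    (IsDomain B ∧ Algebra.FiniteType k B) ∧
    (IsDomain Rees ∧ Algebra.FiniteType k Rees) ∧
    -- `(s)` is a prime ideal of height `1` in `B̃`:
    (Ideal.span {sE}).IsPrime ∧
    (∃ q : Ideal Rees, q.IsPrime ∧ q < Ideal.span {sE}) ∧
    (¬ ∃ q₁ q₂ : Ideal Rees, q₁.IsPrime ∧ q₂.IsPrime ∧
        q₁ < q₂ ∧ q₂ < Ideal.span {sE}) ∧
    -- `B̃/(s) ≅ gr(B)`: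
    Nonempty ((Rees ⧸ Ideal.span {sE}) ≃ₐ[k] G) ∧
    -- `dim B = dim gr(B)`:
    ringKrullDim B = ringKrullDim G :=
  statement8_general F hneg hmono hone hmul hexh σ hker hσmul hσone hinternal hGdom hGfg Rees
    hRees sE hsE
end

section
/- Assume the Krull dimension of A is strictly greater than 1, that A satisfies condition (*), and that the normalization Ā is a finitely generated A-module. Then the ring A' satisfies Serre's condition (S₂): depth(A'_q) ≥ min(2, ht(q)) for every prime ideal q of A'; moreover A' is contained in every subdomain of Ā which contains A, is Noetherian, and satisfies (S₂). -/
set_option synthInstance.maxHeartbeats 1000000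
set_option maxHeartbeats 1000000

/-!
`A` is a Noetherian integral domain with fraction field `K = FractionRing A`.
`A'` is the intersection, inside `K`, of the localizations `A_p` at all height-one
primes `p` of `A`; membership in `A'` is expressed by the predicate `MemHtOneLoc`.
The depth of a Noetherian local ring is the maximal length of a regular sequence in
its maximal ideal; Serre's condition `(S₂)` (`depth(A_p) ≥ min(2, ht p)` for all
primes `p`) is expressed by `SerreS2`, using the maximal ideal `p·A_p` of the
localization `A_p` and explicit chains of primes to express heights.
-/

/-- `P` is a prime ideal of height one: it is prime, there is a chain `q < P` of primes
below it, but no chain `q₁ < q₂ < P` of primes below it. -/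
def HeightOneIdeal {S : Type*} [CommRing S] (P : Ideal S) : Prop :=
  P.IsPrime ∧ (∃ q : Ideal S, q.IsPrime ∧ q < P) ∧
    ¬ ∃ q₁ q₂ : Ideal S, q₁.IsPrime ∧ q₂.IsPrime ∧ q₁ < q₂ ∧ q₂ < P

/-- `x ∈ A_p ⊆ K` for every height-one prime `p` of `A`, i.e. `x ∈ A'`. -/
def MemHtOneLoc (A : Type*) [CommRing A] (K : Type*) [CommRing K] [Algebra A K]
    (x : K) : Prop :=
  ∀ p : Ideal A, HeightOneIdeal p →
    ∃ a s : A, s ∉ p ∧ x * algebraMap A K s = algebraMap A K a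

/-- `r` is a regular sequence on `S` contained in the ideal `I`: each `r i` lies in `I`
and is a nonzerodivisor modulo the ideal generated by the previous terms. -/
def IsRegSeq {S : Type*} [CommRing S] (I : Ideal S) {d : ℕ} (r : Fin d → S) : Prop :=
  (∀ i, r i ∈ I) ∧ ∀ (i : Fin d) (x : S),
    r i * x ∈ Ideal.span {y : S | ∃ j : Fin d, j < i ∧ y = r j} →
    x ∈ Ideal.span {y : S | ∃ j : Fin d, j < i ∧ y = r j}

/-- Serre's condition `(S₂)`: for every prime `p` of `A`, the depth of the local ring
`A_p` is at least `min(2, ht p)`; heights are expressed by chains of primes and depth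
by the existence of regular sequences in the maximal ideal `p·A_p` of `A_p`. -/
def SerreS2 (A : Type*) [CommRing A] : Prop :=
  ∀ (p : Ideal A) (hp : p.IsPrime),
    ((∃ q : Ideal A, q.IsPrime ∧ q < p) →
      ∃ r : Fin 1 → Localization (@Ideal.primeCompl A _ p hp),
        IsRegSeq (p.map (algebraMap A (Localization (@Ideal.primeCompl A _ p hp)))) r) ∧
    ((∃ q₁ q₂ : Ideal A, q₁.IsPrime ∧ q₂.IsPrime ∧ q₁ < q₂ ∧ q₂ < p) →
      ∃ r : Fin 2 → Localization (@Ideal.primeCompl A _ p hp),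
        IsRegSeq (p.map (algebraMap A (Localization (@Ideal.primeCompl A _ p hp)))) r)

/-!
For a Noetherian domain `R` with fraction field `K`, condition `(S₂)` says that every associated
prime of `K / R`, that is every prime of the form `(R :_R w)` with `w ∈ K`, has height at most one.

Let `B ⊆ Ā` be a Noetherian ring with `(S₂)` and suppose `z ∈ A'` is not in `B`. Some associated
prime `P` of `K / B` contains `(B :_B z)`; it has height one, so by (*) it contracts to a height-one
prime `p` of `A`. But `z ∈ A_p` has a denominator outside `p`, which lies in `(B :_B z) ⊆ P`.

The normal ring `Ā` has `(S₂)`, so `A' ⊆ Ā` is finite over `A`. If some `P = (A' :_{A'} w)` had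
height at least two, then so would `I = P ∩ A`, and `I` would be contained in no height-one prime.
Then `I w ⊆ A'` forces `w ∈ A'`, which is absurd. Hence `A'` has `(S₂)`.
-/

section Height

variable {R : Type*} [CommRing R] {p : Ideal R}

lemma exists_isPrime_lt_iff_height_pos (hp : p.IsPrime) :
    (∃ q : Ideal R, q.IsPrime ∧ q < p) ↔ 0 < p.height := by
  rw [PrimeSpectrum.height_eq_orderHeight ⟨p, hp⟩, Order.height_pos, not_isMin_iff]
  exact ⟨fun ⟨q, hq, hqp⟩ => ⟨⟨q, hq⟩, hqp⟩, fun ⟨q, hqp⟩ => ⟨q.asIdeal, q.isPrime, hqp⟩⟩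

lemma exists_isPrime_lt_lt_iff_one_lt_height (hp : p.IsPrime) :
    (∃ q₁ q₂ : Ideal R, q₁.IsPrime ∧ q₂.IsPrime ∧ q₁ < q₂ ∧ q₂ < p) ↔ 1 < p.height := by
  rw [PrimeSpectrum.height_eq_orderHeight ⟨p, hp⟩, Order.one_lt_height_iff]
  constructor
  · rintro ⟨q₁, q₂, hq₁, hq₂, h₁₂, h₂p⟩
    exact ⟨⟨q₂, hq₂⟩, ⟨q₁, hq₁⟩, h₁₂, h₂p⟩
  · rintro ⟨q₂, q₁, h₁₂, h₂p⟩
    exact ⟨q₁.asIdeal, q₂.asIdeal, q₁.isPrime, q₂.isPrime, h₁₂, h₂p⟩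

lemma heightOneIdeal_iff : HeightOneIdeal p ↔ p.IsPrime ∧ p.height = 1 := by
  refine and_congr_right fun hp => ?_
  rw [exists_isPrime_lt_iff_height_pos hp, exists_isPrime_lt_lt_iff_one_lt_height hp, not_lt,
    ← Order.one_le_iff_pos, and_comm, ← le_antisymm_iff]

lemma heightOneIdeal_iff_of_isDomain [IsDomain R] :
    HeightOneIdeal p ↔ p.IsPrime ∧ p ≠ ⊥ ∧ p.height ≤ 1 := by
  rw [heightOneIdeal_iff, le_antisymm_iff, and_comm (a := p.height ≤ 1), Order.one_le_iff_ne_zero,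
    Ne, Ideal.height_eq_zero_iff_eq_bot]

lemma height_le_height_comap_of_isIntegral {S : Type*} [CommRing S] [Algebra R S]
    [Algebra.IsIntegral R S] (P : Ideal S) [P.IsPrime] :
    P.height ≤ (P.comap (algebraMap R S)).height := by
  rw [PrimeSpectrum.height_eq_orderHeight ⟨P, ‹_›⟩,
    PrimeSpectrum.height_eq_orderHeight ⟨P.comap (algebraMap R S), inferInstance⟩]
  exact Order.height_le_height_apply_of_strictMono (PrimeSpectrum.comap (algebraMap R S))
    (fun _ _ h => Ideal.IsIntegral.comap_lt_comap h) _

lemma HeightOneIdeal.comap_of_forall_comap {A B C : Type*} [CommRing A] [CommRing B] [IsDomain B]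
    [CommRing C] [IsDomain C] [Algebra A B] [Algebra B C] [Algebra A C] [IsScalarTower A B C]
    [Algebra.IsIntegral B C] [FaithfulSMul B C]
    (hC : ∀ Q : Ideal C, HeightOneIdeal Q → HeightOneIdeal (Q.comap (algebraMap A C)))
    {P : Ideal B} (hP : HeightOneIdeal P) : HeightOneIdeal (P.comap (algebraMap A B)) := by
  obtain ⟨hPprime, hP0, hP1⟩ := heightOneIdeal_iff_of_isDomain.1 hP
  obtain ⟨Q, hQprime, rfl⟩ := Ideal.exists_ideal_over_prime_of_isIntegral_of_isDomain (S := C) P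
    (by simp [(RingHom.injective_iff_ker_eq_bot _).1 (FaithfulSMul.algebraMap_injective B C)])
  rw [Ideal.comap_comap, ← IsScalarTower.algebraMap_eq]
  refine hC Q (heightOneIdeal_iff_of_isDomain.2 ⟨hQprime, ?_, ?_⟩)
  · rintro rfl
    exact hP0 (Ideal.comap_bot_of_injective _ (FaithfulSMul.algebraMap_injective B C))
  · exact (height_le_height_comap_of_isIntegral Q).trans hP1

end Height

section AssociatedPrime

variable {R M : Type*} [CommRing R] [AddCommGroup M] [Module R M]

lemma colon_bot_mk_eq (N : Submodule R M) (x : M) :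
    (⊥ : Submodule R (M ⧸ N)).colon {N.mkQ x} = N.colon {x} := by
  ext c
  rw [Submodule.mem_colon_singleton, Submodule.mem_colon_singleton, Submodule.mem_bot, ← map_smul,
    Submodule.mkQ_apply, Submodule.Quotient.mk_eq_zero]

lemma isAssociatedPrime_quotient_iff {N : Submodule R M} {P : Ideal R} :
    IsAssociatedPrime P (M ⧸ N) ↔ N.IsAssociatedPrime P := by
  rw [IsAssociatedPrime, Submodule.isAssociatedPrime_def, Submodule.isAssociatedPrime_def,
    N.mkQ_surjective.exists]
  simp only [colon_bot_mk_eq]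

lemma exists_isAssociatedPrime_colon_le [IsNoetherianRing R] {N : Submodule R M} {x : M}
    (hx : x ∉ N) : ∃ P : Ideal R, N.IsAssociatedPrime P ∧ N.colon {x} ≤ P := by
  obtain ⟨P, hP, hxP⟩ := exists_le_isAssociatedPrime_of_isNoetherianRing R (N.mkQ x)
    (by rwa [Submodule.mkQ_apply, Ne, Submodule.Quotient.mk_eq_zero])
  exact ⟨P, isAssociatedPrime_quotient_iff.1 hP, (colon_bot_mk_eq N x).ge.trans hxP⟩

lemma exists_mem_isSMulRegular_of_forall_not_le [IsNoetherianRing R] [Module.Finite R M]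
    {I : Ideal R} (hI : ∀ P ∈ associatedPrimes R M, ¬ I ≤ P) : ∃ y ∈ I, IsSMulRegular M y := by
  by_contra! h
  obtain ⟨P, hP, hIP⟩ := (Ideal.subset_union_prime_finite (associatedPrimes.finite R M) ⊥ ⊥
    (fun P hP _ _ => IsAssociatedPrime.isPrime hP)).1
    (by rw [biUnion_associatedPrimes_eq_compl_regular]; exact h)
  exact hI P hP hIP

end AssociatedPrime

section RegularSequence

variable {S : Type*} [CommRing S]

lemma isRegSeq_one_iff (I : Ideal S) (r : Fin 1 → S) :
    IsRegSeq I r ↔ r 0 ∈ I ∧ ∀ x, r 0 * x = 0 → x = 0 := by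
  simp [IsRegSeq]

lemma isRegSeq_two_iff (I : Ideal S) (r : Fin 2 → S) :
    IsRegSeq I r ↔ r 0 ∈ I ∧ r 1 ∈ I ∧ (∀ x, r 0 * x = 0 → x = 0) ∧
      ∀ x, r 0 ∣ r 1 * x → r 0 ∣ x := by
  simp [IsRegSeq, Fin.forall_fin_two, Ideal.mem_span_singleton, and_assoc]

end RegularSequence

section Localization

variable {R : Type*} [CommRing R]

lemma algebraMap_dvd_algebraMap_iff (M : Submonoid R) {L : Type*} [CommRing L] [Algebra R L]
    [IsLocalization M L] {x t : R} :
    algebraMap R L x ∣ algebraMap R L t ↔ ∃ s ∈ M, x ∣ s * t := by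
  simp only [← Ideal.mem_span_singleton]
  rw [← Set.image_singleton, ← Ideal.map_span,
    IsLocalization.algebraMap_mem_map_algebraMap_iff M]

lemma exists_mem_associated_algebraMap (M : Submonoid R) {L : Type*} [CommRing L] [Algebra R L]
    [IsLocalization M L] {I : Ideal R} {z : L} (hz : z ∈ I.map (algebraMap R L)) :
    ∃ x ∈ I, Associated z (algebraMap R L x) := by
  obtain ⟨⟨x, s⟩, hxs⟩ := (IsLocalization.mem_map_algebraMap_iff M L).1 hz
  exact ⟨x, x.2, hxs ▸ associated_mul_unit_right z _ (IsLocalization.map_units L s)⟩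

variable [IsDomain R] (p : Ideal R) [p.IsPrime]

lemma exists_isRegSeq_one_localization (hp : p ≠ ⊥) :
    ∃ r : Fin 1 → Localization p.primeCompl,
      IsRegSeq (p.map (algebraMap R (Localization p.primeCompl))) r := by
  obtain ⟨x, hx, hx0⟩ := Submodule.exists_mem_ne_zero_of_ne_bot hp
  have hx0' : algebraMap R (Localization p.primeCompl) x ≠ 0 := by simpa
  refine ⟨fun _ => algebraMap R _ x, (isRegSeq_one_iff _ _).2 ⟨Ideal.mem_map_of_mem _ hx, ?_⟩⟩
  exact fun z hz => (mul_eq_zero.1 hz).resolve_left hx0'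

lemma exists_isRegSeq_two_localization_iff :
    (∃ r : Fin 2 → Localization p.primeCompl,
      IsRegSeq (p.map (algebraMap R (Localization p.primeCompl))) r) ↔
      ∃ x ∈ p, ∃ y ∈ p, x ≠ 0 ∧ ∀ t, (∃ s ∉ p, x ∣ s * (y * t)) → ∃ s ∉ p, x ∣ s * t := by
  let L := Localization p.primeCompl
  have dvd_iff {x t : R} : algebraMap R L x ∣ algebraMap R L t ↔ ∃ s ∉ p, x ∣ s * t :=
    algebraMap_dvd_algebraMap_iff p.primeCompl
  constructor
  · rintro ⟨r, hr⟩
    obtain ⟨hr₀, hr₁, hreg₀, hreg₁⟩ := (isRegSeq_two_iff _ r).1 hr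
    obtain ⟨x, hx, hrx⟩ := exists_mem_associated_algebraMap p.primeCompl hr₀
    obtain ⟨y, hy, hry⟩ := exists_mem_associated_algebraMap p.primeCompl hr₁
    refine ⟨x, hx, y, hy, ?_, fun t ht => ?_⟩
    · rintro rfl
      rw [map_zero, associated_zero_iff_eq_zero] at hrx
      exact one_ne_zero (hreg₀ 1 (by rw [hrx, zero_mul]))
    · rw [← dvd_iff, map_mul, ← hrx.dvd_iff_dvd_left, ← (hry.mul_right _).dvd_iff_dvd_right] at ht
      rw [← dvd_iff, ← hrx.dvd_iff_dvd_left]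
      exact hreg₁ _ ht
  · rintro ⟨x, hx, y, hy, hx0, hreg⟩
    have hx0' : algebraMap R L x ≠ 0 := by simpa [L]
    refine ⟨![algebraMap R L x, algebraMap R L y], (isRegSeq_two_iff _ _).2
      ⟨Ideal.mem_map_of_mem _ hx, Ideal.mem_map_of_mem _ hy,
        fun z hz => (mul_eq_zero.1 hz).resolve_left hx0', fun z hz => ?_⟩⟩
    obtain ⟨t, -, hzt⟩ := exists_mem_associated_algebraMap p.primeCompl (I := ⊤) (z := z)
      (by rw [Ideal.map_top]; trivial)
    change algebraMap R L x ∣ algebraMap R L y * z at hz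
    change algebraMap R L x ∣ z
    rw [(hzt.mul_left _).dvd_iff_dvd_right, ← map_mul, dvd_iff] at hz
    rw [hzt.dvd_iff_dvd_right, dvd_iff]
    exact hreg t hz

end Localization

section SerreS2

variable {R : Type*} [CommRing R] {K : Type*} [Field K] [Algebra R K]

lemma mem_colon_one_iff {c : R} {w : K} :
    c ∈ (1 : Submodule R K).colon {w} ↔ ∃ d : R, algebraMap R K d = algebraMap R K c * w := by
  rw [Submodule.mem_colon_singleton, Submodule.mem_one, Algebra.smul_def]

lemma colon_one_ne_bot [IsDomain R] [IsFractionRing R K] (w : K) :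
    (1 : Submodule R K).colon {w} ≠ ⊥ := by
  obtain ⟨⟨a, s⟩, has⟩ := IsLocalization.surj (nonZeroDivisors R) w
  refine Submodule.ne_bot_iff _ |>.2 ⟨s, ?_, nonZeroDivisors.coe_ne_zero s⟩
  exact mem_colon_one_iff.2 ⟨a, by rw [← has, mul_comm]⟩

lemma isAssociatedPrime_one_of_span_singleton [FaithfulSMul R K] {x : R} (hx : x ≠ 0) {P : Ideal R}
    (hP : Submodule.IsAssociatedPrime (Ideal.span {x}) P) :
    (1 : Submodule R K).IsAssociatedPrime P := by
  obtain ⟨hPprime, t, rfl⟩ := hP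
  have hxK : algebraMap R K x ≠ 0 := by simpa
  refine ⟨hPprime, algebraMap R K t / algebraMap R K x, congrArg Ideal.radical ?_⟩
  ext c
  rw [Submodule.mem_colon_singleton, Ideal.mem_span_singleton, mem_colon_one_iff]
  refine exists_congr fun d => ?_
  rw [← mul_div_assoc, eq_div_iff hxK, ← map_mul, ← map_mul,
    (FaithfulSMul.algebraMap_injective R K).eq_iff, smul_eq_mul, mul_comm d, eq_comm]

lemma exists_algebraMap_eq_of_smul_ideal_le [IsNoetherianRing R] [IsIntegrallyClosed R]
    [IsFractionRing R K] {I : Ideal R} (hI : I ≠ ⊥) {w : K}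
    (hw : ∀ c ∈ I, ∃ d ∈ I, algebraMap R K d = algebraMap R K c * w) :
    ∃ d : R, algebraMap R K d = w := by
  have hinj : Function.Injective (Algebra.linearMap R K) := IsFractionRing.injective R K
  refine IsIntegrallyClosed.isIntegral_iff.1 <|
    isIntegral_of_smul_mem_submodule (Submodule.map (Algebra.linearMap R K) I) ?_
      (Submodule.FG.map _ (IsNoetherian.noetherian I)) w ?_
  · exact ((Submodule.map_injective_of_injective hinj).ne_iff' (Submodule.map_bot _)).2 hI
  · rintro _ ⟨c, hc, rfl⟩
    obtain ⟨d, hd, hdc⟩ := hw c hc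
    exact ⟨d, hd, hdc.trans (mul_comm _ _)⟩

variable [IsDomain R] [IsNoetherianRing R]

lemma SerreS2.height_le_one [FaithfulSMul R K] (hR : SerreS2 R) {P : Ideal R}
    (hP : (1 : Submodule R K).IsAssociatedPrime P) : P.height ≤ 1 := by
  obtain ⟨hPprime, w, hPw⟩ := Submodule.isAssociatedPrime_iff.1 hP
  have mem_iff {c : R} : c ∈ P ↔ ∃ d : R, algebraMap R K d = algebraMap R K c * w := by
    rw [hPw, mem_colon_one_iff]
  by_contra! hht
  obtain ⟨x, hx, y, hy, hx0, hreg⟩ := (exists_isRegSeq_two_localization_iff P).1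
    ((hR P hPprime).2 ((exists_isPrime_lt_lt_iff_one_lt_height hPprime).2 hht))
  obtain ⟨a, ha⟩ := mem_iff.1 hx
  obtain ⟨b, hb⟩ := mem_iff.1 hy
  have hya : y * a = x * b := FaithfulSMul.algebraMap_injective R K <| by
    rw [map_mul, map_mul, ha, hb, mul_left_comm]
  obtain ⟨s, hs, d, hd⟩ :=
    hreg a ⟨1, hPprime.one_notMem, b, by rw [one_mul, hya]⟩
  have hxK : algebraMap R K x ≠ 0 := by simpa
  refine hs (mem_iff.2 ⟨d, mul_left_cancel₀ hxK ?_⟩)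
  rw [← map_mul, ← hd, map_mul, ha, mul_left_comm]

lemma serreS2_of_forall_height_le_one [FaithfulSMul R K]
    (h : ∀ P : Ideal R, (1 : Submodule R K).IsAssociatedPrime P → P.height ≤ 1) : SerreS2 R := by
  intro p hp
  rw [exists_isPrime_lt_iff_height_pos hp, exists_isPrime_lt_lt_iff_one_lt_height hp]
  have ne_bot (hht : 0 < p.height) : p ≠ ⊥ := by
    rintro rfl
    exact hht.ne' Ideal.height_bot
  refine ⟨fun hht => exists_isRegSeq_one_localization p (ne_bot hht), fun hht => ?_⟩
  obtain ⟨x, hx, hx0⟩ := Submodule.exists_mem_ne_zero_of_ne_bot (ne_bot (zero_lt_one.trans hht))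
  obtain ⟨y, hy, hreg⟩ : ∃ y ∈ p, IsSMulRegular (R ⧸ Ideal.span {x}) y := by
    refine exists_mem_isSMulRegular_of_forall_not_le fun P hP hpP => ?_
    have hP' := isAssociatedPrime_one_of_span_singleton (K := K) hx0
      (isAssociatedPrime_quotient_iff.1 hP)
    exact (hht.trans_le (Ideal.height_mono hpP)).not_ge (h P hP')
  refine (exists_isRegSeq_two_localization_iff p).2 ⟨x, hx, y, hy, hx0, ?_⟩
  rintro t ⟨s, hs, hst⟩
  refine ⟨s, hs, Ideal.mem_span_singleton.1 ?_⟩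
  refine mem_of_isSMulRegular_quotient_of_smul_mem hreg ?_
  rwa [smul_eq_mul, mul_left_comm, Ideal.mem_span_singleton]

lemma height_le_one_of_isIntegrallyClosed [IsIntegrallyClosed R] [IsFractionRing R K] {P : Ideal R}
    (hP : (1 : Submodule R K).IsAssociatedPrime P) : P.height ≤ 1 := by
  obtain ⟨hPprime, w, hPw⟩ := Submodule.isAssociatedPrime_iff.1 hP
  have mem_iff {c : R} : c ∈ P ↔ ∃ d : R, algebraMap R K d = algebraMap R K c * w := by
    rw [hPw, mem_colon_one_iff]
  obtain ⟨c, hc, u, hu, huc⟩ : ∃ c ∈ P, ∃ u ∉ P, algebraMap R K u = algebraMap R K c * w := by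
    by_contra! hstable
    obtain ⟨d, rfl⟩ := exists_algebraMap_eq_of_smul_ideal_le (hPw ▸ colon_one_ne_bot w) fun c hc =>
      (mem_iff.1 hc).imp fun d hd => ⟨of_not_not fun hdP => hstable c hc d hdP hd, hd⟩
    exact hPprime.one_notMem (mem_iff.2 ⟨d, by rw [map_one, one_mul]⟩)
  -- `u * q = c * (w * q)` for `q ∈ P`, so `P` becomes principal, generated by `c`, once the element
  -- `u ∉ P` is inverted.
  refine Ideal.height_le_one_of_isPrincipal_of_mem_minimalPrimes (Ideal.span {c}) P
    ⟨⟨hPprime, (Ideal.span_singleton_le_iff_mem P).2 hc⟩, fun Q ⟨hQprime, hcQ⟩ hQP q hq => ?_⟩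
  obtain ⟨d, hd⟩ := mem_iff.1 hq
  have huq : u * q = c * d := IsFractionRing.injective R K <| by
    rw [map_mul, map_mul, huc, hd, mul_right_comm, mul_assoc]
  have huqQ : u * q ∈ Q := huq ▸ Q.mul_mem_right d ((Ideal.span_singleton_le_iff_mem Q).1 hcQ)
  exact (hQprime.mem_or_mem huqQ).resolve_left fun huQ => hu (hQP huQ)

lemma serreS2_of_isIntegrallyClosed [IsIntegrallyClosed R] : SerreS2 R :=
  serreS2_of_forall_height_le_one (K := FractionRing R) fun _ => height_le_one_of_isIntegrallyClosed

end SerreS2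

section HeightOneIntersection

variable (A : Type*) [CommRing A] [IsDomain A] (K : Type*) [Field K] [Algebra A K]
  [IsFractionRing A K]

/-- The ring `A' = ⋂ A_p ⊆ K`, where `p` runs over the primes of height one of `A` and `A_p` is
realised inside the fraction field `K` of `A`. -/
noncomputable def heightOneIntersection : Subalgebra A K :=
  ⨅ (p : Ideal A) (hp : HeightOneIdeal p),
    have := hp.1
    Localization.subalgebra.ofField K p.primeCompl p.primeCompl_le_nonZeroDivisors

variable {A K}

lemma mem_heightOneIntersection_iff {x : K} :
    x ∈ heightOneIntersection A K ↔ MemHtOneLoc A K x := by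
  simp only [heightOneIntersection, Algebra.mem_iInf]
  refine forall₂_congr fun p hp => exists₂_congr fun a s => ?_
  rw [exists_prop]
  refine and_congr_right fun hs => eq_mul_inv_iff_mul_eq₀ ?_
  rw [Ne, FaithfulSMul.algebraMap_eq_zero_iff]
  rintro rfl
  exact hs p.zero_mem

lemma mem_heightOneIntersection_of_forall_mul_mem {I : Ideal A} (hI : 1 < I.height) {x : K}
    (hx : ∀ s ∈ I, algebraMap A K s * x ∈ heightOneIntersection A K) :
    x ∈ heightOneIntersection A K := by
  refine mem_heightOneIntersection_iff.2 fun p hp => ?_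
  obtain ⟨hpprime, hpht⟩ := heightOneIdeal_iff.1 hp
  obtain ⟨s, hs, hsp⟩ : ∃ s ∈ I, s ∉ p :=
    SetLike.not_le_iff_exists.1 fun hIp => hI.not_ge (hpht ▸ Ideal.height_mono hIp)
  obtain ⟨a, t, htp, hta⟩ := mem_heightOneIntersection_iff.1 (hx s hs) p hp
  exact ⟨a, s * t, hpprime.mul_notMem hsp htp, by rw [← hta, map_mul, mul_left_comm, mul_assoc]⟩

lemma heightOneIntersection_le {B : Subalgebra A K} [IsNoetherianRing B] (hB : SerreS2 B)
    (hcomap : ∀ P : Ideal B, HeightOneIdeal P → HeightOneIdeal (P.comap (algebraMap A B))) :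
    heightOneIntersection A K ≤ B := by
  intro z hz
  by_contra hzB
  have hz1 : z ∉ (1 : Submodule B K) := by
    rw [Submodule.mem_one]
    rintro ⟨b, rfl⟩
    exact hzB b.2
  obtain ⟨P, hP, hzP⟩ := exists_isAssociatedPrime_colon_le hz1
  have hP0 : P ≠ ⊥ := ne_bot_of_le_ne_bot (colon_one_ne_bot z) hzP
  have hP1 : HeightOneIdeal P :=
    heightOneIdeal_iff_of_isDomain.2 ⟨hP.1, hP0, hB.height_le_one hP⟩
  obtain ⟨a, s, hs, hsa⟩ := mem_heightOneIntersection_iff.1 hz _ (hcomap P hP1)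
  exact hs (hzP (mem_colon_one_iff.2 ⟨algebraMap A B a, (mul_comm _ z).trans hsa |>.symm⟩))

lemma serreS2_heightOneIntersection [IsNoetherianRing (heightOneIntersection A K)]
    [Algebra.IsIntegral A (heightOneIntersection A K)] : SerreS2 (heightOneIntersection A K) := by
  refine serreS2_of_forall_height_le_one (K := K) fun P hP => ?_
  obtain ⟨hPprime, w, hPw⟩ := Submodule.isAssociatedPrime_iff.1 hP
  by_contra! hht
  have hw : w ∈ heightOneIntersection A K := by
    refine mem_heightOneIntersection_of_forall_mul_mem
      (hht.trans_le (height_le_height_comap_of_isIntegral (R := A) P)) fun s hs => ?_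
    rw [hPw, Ideal.mem_comap, mem_colon_one_iff] at hs
    obtain ⟨d, hd⟩ := hs
    exact (show (d : K) = algebraMap A K s * w from hd) ▸ d.2
  refine hPprime.one_notMem ?_
  rw [hPw, mem_colon_one_iff]
  exact ⟨⟨w, hw⟩, by rw [map_one, one_mul]; rfl⟩

lemma heightOneIntersection_le_of_le_integralClosure {B : Subalgebra A K}
    (hB : B ≤ integralClosure A K) [IsNoetherianRing B] (hS2 : SerreS2 B)
    (hstar : ∀ P : Ideal (integralClosure A K), HeightOneIdeal P →
      HeightOneIdeal (P.comap (algebraMap A (integralClosure A K)))) :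
    heightOneIntersection A K ≤ B := by
  let := (Subalgebra.inclusion hB).toAlgebra
  have : IsScalarTower A B (integralClosure A K) := .of_algebraMap_eq fun _ => rfl
  have : Algebra.IsIntegral B (integralClosure A K) := .tower_top A
  have : FaithfulSMul B (integralClosure A K) :=
    (faithfulSMul_iff_algebraMap_injective _ _).2 (Subalgebra.inclusion_injective hB)
  exact heightOneIntersection_le hS2 fun _ => HeightOneIdeal.comap_of_forall_comap hstar

end HeightOneIntersection

theorem statement13_general {A K : Type*} [CommRing A] [IsDomain A] [IsNoetherianRing A] [Field K]
    [Algebra A K] [IsFractionRing A K] [Module.Finite A (integralClosure A K)]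
    (hstar : ∀ P : Ideal (integralClosure A K), HeightOneIdeal P →
      HeightOneIdeal (P.comap (algebraMap A (integralClosure A K)))) :
    SerreS2 (heightOneIntersection A K) ∧
      ∀ B : Subalgebra A K, B ≤ integralClosure A K → SerreS2 B →
        heightOneIntersection A K ≤ B := by
  have : IsNoetherianRing (integralClosure A K) := .of_finite A _
  have : IsIntegrallyClosed (integralClosure A K) :=
    .of_isIntegrallyClosedIn (integralClosure A K) K
  have hle : heightOneIntersection A K ≤ integralClosure A K :=
    heightOneIntersection_le serreS2_of_isIntegrallyClosed hstar
  have finite_of_le {B : Subalgebra A K} (hB : B ≤ integralClosure A K) : Module.Finite A B :=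
    .of_injective (Subalgebra.inclusion hB).toLinearMap (Subalgebra.inclusion_injective hB)
  have := finite_of_le hle
  have : IsNoetherianRing (heightOneIntersection A K) := .of_finite A _
  refine ⟨serreS2_heightOneIntersection, fun B hB hS2 => ?_⟩
  have := finite_of_le hB
  have : IsNoetherianRing B := .of_finite A B
  exact heightOneIntersection_le_of_le_integralClosure hB hS2 hstar

/-- Assume `dim A > 1`, condition (*), and that the normalization `Ā`
is a finitely generated `A`-module.  Then `A'` satisfies Serre's condition `(S₂)`, and
`A'` is contained in every subdomain of `Ā` which contains `A`, is Noetherian and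
satisfies `(S₂)`. -/
theorem statement13 (A : Type) [CommRing A] [IsDomain A] [IsNoetherianRing A]
    (hdim : 1 < ringKrullDim A)
    (hstar : ∀ P : Ideal (integralClosure A (FractionRing A)), HeightOneIdeal P →
      HeightOneIdeal (P.comap (algebraMap A (integralClosure A (FractionRing A)))))
    (hfin : Module.Finite A (integralClosure A (FractionRing A)))
    (A' : Subalgebra A (FractionRing A))
    (hA' : ∀ x : FractionRing A, x ∈ A' ↔ MemHtOneLoc A (FractionRing A) x) :
    SerreS2 A' ∧
    ∀ B : Subring (FractionRing A),
      (∀ a : A, algebraMap A (FractionRing A) a ∈ B) →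
      (∀ x ∈ B, x ∈ integralClosure A (FractionRing A)) →
      IsDomain B → IsNoetherianRing B → SerreS2 B →
      ∀ x : FractionRing A, x ∈ A' → x ∈ B := by
  obtain rfl : A' = heightOneIntersection A (FractionRing A) :=
    SetLike.ext fun x => (hA' x).trans mem_heightOneIntersection_iff.symm
  obtain ⟨hS2, hle⟩ := statement13_general hstar
  exact ⟨hS2, fun B hAB hBC _ _ hB x hx => hle { B with algebraMap_mem' := hAB } hBC hB hx⟩
end

section
/- Let R̃ be a ring with R ⊆ R̃ ⊆ K such that R̃ is finitely generated as an R-module, and let a, b ∈ R be nonzero. Then the R-modules R/bR, R/aR, R̃/bR̃, R̃/aR̃ all have finite length and length_R(R/bR) − length_R(R/aR) = length_R(R̃/bR̃) − length_R(R̃/aR̃) as integers. -/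
set_option synthInstance.maxHeartbeats 1000000
set_option maxHeartbeats 2000000

/-!
`R` is a Noetherian local integral domain of Krull dimension `1` with fraction field
`K = FractionRing R`.  The length of an `R`-module is expressed by the predicate
`HasLength R M d`: there is a maximal chain (composition series)
`⊥ = c₀ ⋖ c₁ ⋖ ⋯ ⋖ c_d = ⊤` of submodules of `M`; by Jordan–Hölder this `d` is unique
when it exists, and its existence expresses that `M` has finite length `d`.
-/

/-- The `R`-module `M` has (finite) length `d`. -/
def HasLength (R M : Type*) [Ring R] [AddCommGroup M] [Module R M] (d : ℕ) : Prop :=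
  ∃ c : Fin (d + 1) → Submodule R M, c 0 = ⊥ ∧ c (Fin.last d) = ⊤ ∧
    ∀ i : Fin d, c i.castSucc ⋖ c i.succ

/-!
More than the equality of the differences holds: `R/cR` and `R̃/cR̃` have the same length for every
nonzerodivisor `c`. Clearing the denominators of finitely many generators, some nonzerodivisor
kills `R̃/R`, which therefore has finite length. Multiplication by `c` gives two chains
`cR ⊆ R ⊆ R̃` and `cR ⊆ cR̃ ⊆ R̃`, in which `cR̃/cR ≅ R̃/R`. Computing the length of `R̃/cR` along both
and cancelling the length of `R̃/R` yields the equality.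
-/

open scoped nonZeroDivisors

section Length

variable {R M N P : Type*} [Ring R] [AddCommGroup M] [AddCommGroup N] [AddCommGroup P]
  [Module R M] [Module R N] [Module R P]

theorem hasLength_iff_length_eq {n : ℕ} : HasLength R M n ↔ Module.length R M = n := by
  constructor
  · rintro ⟨c, hbot, htop, hcov⟩
    exact (Module.length_compositionSeries ⟨n, c, hcov⟩ hbot htop).symm
  · intro h
    have hfin : IsFiniteLength R M :=
      Module.length_ne_top_iff.mp (h ▸ ENat.natCast_ne_top n)
    obtain ⟨s, hbot, htop⟩ := isFiniteLength_iff_exists_compositionSeries.mp hfin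
    obtain rfl : s.length = n :=
      ENat.natCast_inj.mp ((Module.length_compositionSeries s hbot htop).trans h)
    exact ⟨s.toFun, hbot, htop, s.step⟩

theorem length_quotient_range_comp (f : M →ₗ[R] N) {g : N →ₗ[R] P} (hg : Function.Injective g) :
    Module.length R (P ⧸ (g ∘ₗ f).range) =
      Module.length R (N ⧸ f.range) + Module.length R (P ⧸ g.range) := by
  have hcomap : (g ∘ₗ f).range.comap g = f.range := by
    rw [LinearMap.range_comp, Submodule.comap_map_eq_of_injective hg]
  have hle : (g ∘ₗ f).range ≤ g.range := LinearMap.range_comp_le_range f g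
  refine Module.length_eq_add_of_exact (Submodule.mapQ _ _ g hcomap.ge) (Submodule.factor hle)
    ?_ (Submodule.factor_surjective hle) ?_
  · rw [← LinearMap.ker_eq_bot, Submodule.ker_mapQ, hcomap, Submodule.mkQ_map_self]
  · rw [LinearMap.exact_iff, Submodule.factor, Submodule.ker_mapQ, Submodule.range_mapQ,
      Submodule.comap_id]

theorem length_quotient_range_eq_of_comp_eq {f : N →ₗ[R] M} (hf : Function.Injective f)
    (hfin : IsFiniteLength R (M ⧸ f.range)) {φ : Module.End R N} {ψ : Module.End R M}
    (hψ : Function.Injective ψ) (hcomm : f ∘ₗ φ = ψ ∘ₗ f) :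
    Module.length R (N ⧸ φ.range) = Module.length R (M ⧸ ψ.range) := by
  refine WithTop.add_right_cancel (Module.length_ne_top_iff.mpr hfin) ?_
  calc Module.length R (N ⧸ φ.range) + Module.length R (M ⧸ f.range)
      = Module.length R (M ⧸ (f ∘ₗ φ).range) := (length_quotient_range_comp φ hf).symm
    _ = Module.length R (M ⧸ (ψ ∘ₗ f).range) := by rw [hcomm]
    _ = Module.length R (M ⧸ f.range) + Module.length R (M ⧸ ψ.range) :=
      length_quotient_range_comp f hψ
    _ = Module.length R (M ⧸ ψ.range) + Module.length R (M ⧸ f.range) := add_comm _ _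

end Length

section CommRing

variable {R : Type*} [CommRing R]

theorem isFiniteLength_of_isTorsionBySet {M : Type*} [AddCommGroup M] [Module R M]
    [Module.Finite R M] {I : Ideal R} (hI : IsFiniteLength R (R ⧸ I))
    (hM : Module.IsTorsionBySet R M I) : IsFiniteLength R M := by
  let _ : Module (R ⧸ I) M := hM.module
  have : Module.Finite (R ⧸ I) M := .of_restrictScalars_finite R (R ⧸ I) M
  obtain ⟨n, f, hf⟩ := Module.Finite.exists_fin' (R ⧸ I) M
  obtain ⟨_, _⟩ := isFiniteLength_iff_isNoetherian_isArtinian.mp hI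
  have hpi : IsFiniteLength R (Fin n → R ⧸ I) :=
    isFiniteLength_iff_isNoetherian_isArtinian.mpr ⟨inferInstance, inferInstance⟩
  exact hpi.of_surjective (f := f.restrictScalars R) hf

section Algebra

variable {S : Type*} [CommRing S] [Algebra R S] (c : R)

theorem restrictScalars_span_algebraMap :
    (Ideal.span {algebraMap R S c}).restrictScalars R = (LinearMap.lsmul R S c).range := by
  ext x
  simp [Ideal.mem_span_singleton', Algebra.smul_def, mul_comm]

theorem length_quotient_span_algebraMap :
    Module.length R (S ⧸ Ideal.span {algebraMap R S c}) =
      Module.length R (S ⧸ (LinearMap.lsmul R S c).range) := by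
  rw [← restrictScalars_span_algebraMap]
  exact (Submodule.Quotient.restrictScalarsEquiv R _).length_eq.symm

variable {c}

theorem lsmul_injective_of_algebraMap_mem_nonZeroDivisors (hc : algebraMap R S c ∈ S⁰) :
    Function.Injective (LinearMap.lsmul R S c) := by
  intro x y hxy
  simp only [LinearMap.lsmul_apply, Algebra.smul_def] at hxy
  exact (mul_cancel_left_mem_nonZeroDivisors hc).mp hxy

theorem length_quotient_span_algebraMap_eq_ord (hinj : Function.Injective (algebraMap R S))
    (hfin : IsFiniteLength R (S ⧸ (Algebra.linearMap R S).range))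
    (hc : algebraMap R S c ∈ S⁰) :
    Module.length R (S ⧸ Ideal.span {algebraMap R S c}) = Ring.ord R c := by
  have hcomm : Algebra.linearMap R S ∘ₗ LinearMap.lsmul R R c =
      LinearMap.lsmul R S c ∘ₗ Algebra.linearMap R S := by
    ext
    simp [Algebra.smul_def]
  calc Module.length R (S ⧸ Ideal.span {algebraMap R S c})
      = Module.length R (S ⧸ (LinearMap.lsmul R S c).range) := length_quotient_span_algebraMap c
    _ = Module.length R (R ⧸ (LinearMap.lsmul R R c).range) :=
      (length_quotient_range_eq_of_comp_eq hinj hfin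
        (lsmul_injective_of_algebraMap_mem_nonZeroDivisors hc) hcomm).symm
    _ = Ring.ord R c := (length_quotient_span_algebraMap (S := R) c).symm

end Algebra

section Subalgebra

variable {K : Type*} [CommRing K] [Algebra R K] [IsFractionRing R K] (Rt : Subalgebra R K)
  [Module.Finite R Rt]

theorem exists_isTorsionBy_subalgebra_quotient :
    ∃ d ∈ R⁰, Module.IsTorsionBy R (Rt ⧸ (Algebra.linearMap R Rt).range) d := by
  have hfg : Rt.toSubmodule.FG := Module.Finite.iff_fg.mp ‹_›
  obtain ⟨d, hd, hint⟩ := FractionalIdeal.isFractional_of_fg (S := R⁰) hfg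
  refine ⟨d, hd, (Module.isTorsionBy_quotient_iff _ d).mpr fun x ↦ ?_⟩
  obtain ⟨r, hr⟩ := hint x x.2
  exact ⟨r, Subtype.ext hr⟩

theorem isFiniteLength_subalgebra_quotient [IsNoetherianRing R] [Ring.KrullDimLE 1 R] :
    IsFiniteLength R (Rt ⧸ (Algebra.linearMap R Rt).range) := by
  obtain ⟨d, hd, htors⟩ := exists_isTorsionBy_subalgebra_quotient Rt
  exact isFiniteLength_of_isTorsionBySet (isFiniteLength_quotient_span_singleton R hd)
    ((Module.isTorsionBySet_span_singleton_iff d).mpr htors)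

end Subalgebra

end CommRing

theorem statement16_general {R K : Type*} [CommRing R] [IsNoetherianRing R] [Ring.KrullDimLE 1 R]
    [CommRing K] [Algebra R K] [IsFractionRing R K] (Rt : Subalgebra R K) [Module.Finite R Rt]
    {c : R} (hc : c ∈ R⁰) :
    ∃ n : ℕ, HasLength R (R ⧸ Ideal.span {c}) n ∧
      HasLength R (Rt ⧸ Ideal.span {algebraMap R Rt c}) n := by
  have hcK : algebraMap R K c ∈ K⁰ := (IsLocalization.map_units K ⟨c, hc⟩).mem_nonZeroDivisors
  have hcRt : algebraMap R Rt c ∈ Rt⁰ :=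
    mem_nonZeroDivisors_of_injective (f := Rt.val) Subtype.val_injective hcK
  have hinj : Function.Injective (algebraMap R Rt) :=
    .of_comp (f := Rt.val) (IsFractionRing.injective R K)
  obtain ⟨n, hn⟩ := ENat.ne_top_iff_exists.mp (Ring.ord_ne_top hc)
  have hlen := length_quotient_span_algebraMap_eq_ord hinj
    (isFiniteLength_subalgebra_quotient Rt) hcRt
  exact ⟨n, hasLength_iff_length_eq.mpr hn.symm, hasLength_iff_length_eq.mpr (hlen.trans hn.symm)⟩

/-- If `R ⊆ R̃ ⊆ K` with `R̃` a finitely generated `R`-module, and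
`a, b ∈ R` are nonzero, then `R/bR`, `R/aR`, `R̃/bR̃`, `R̃/aR̃` have finite lengths
`l₁, l₂, l₃, l₄` as `R`-modules, and `l₁ − l₂ = l₃ − l₄` in `ℤ`. -/
theorem statement16 (R : Type) [CommRing R] [IsDomain R] [IsNoetherianRing R]
    [IsLocalRing R] (hdim : ringKrullDim R = 1)
    (Rt : Subalgebra R (FractionRing R)) (hRt : Module.Finite R Rt)
    (a b : R) (ha : a ≠ 0) (hb : b ≠ 0) :
    ∃ l₁ l₂ l₃ l₄ : ℕ,
      HasLength R (R ⧸ Ideal.span {b}) l₁ ∧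
      HasLength R (R ⧸ Ideal.span {a}) l₂ ∧
      HasLength R (Rt ⧸ Ideal.span {algebraMap R Rt b}) l₃ ∧
      HasLength R (Rt ⧸ Ideal.span {algebraMap R Rt a}) l₄ ∧
      (l₁ : ℤ) - l₂ = (l₃ : ℤ) - l₄ := by
  have : Ring.KrullDimLE 1 R := Ring.krullDimLE_iff.mpr hdim.le
  obtain ⟨m, hRa, hRta⟩ := statement16_general Rt (mem_nonZeroDivisors_of_ne_zero ha)
  obtain ⟨n, hRb, hRtb⟩ := statement16_general Rt (mem_nonZeroDivisors_of_ne_zero hb)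
  exact ⟨n, m, n, m, hRb, hRa, hRtb, hRta, rfl⟩
end

section
/- Let A be an integral domain which is a finitely generated algebra over a field k of characteristic zero and has Krull dimension 2. Then the set of prime ideals p of A such that the local ring A_p is not Cohen–Macaulay is finite. -/
/-- A local ring `S` is Cohen–Macaulay: its Krull dimension is a natural number `d` and
there is a regular sequence of length `d` in its maximal ideal (i.e. depth = dimension). -/
def IsCohenMacaulayLocal (S : Type*) [CommRing S] [IsLocalRing S] : Prop :=
  ∃ d : ℕ, ringKrullDim S = d ∧
    ∃ r : Fin d → S, IsRegSeq (IsLocalRing.maximalIdeal S) r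

/-!
A local domain of dimension at most one is Cohen–Macaulay, so only primes of height two matter.
By Noether normalization `A` is finite over a polynomial ring `B`, and by generic flatness
`A` becomes flat over `B` after inverting some `f ≠ 0` in `B`. A prime `p` of height two
contracts to a non-principal prime of the factorial ring `B`, which contains a regular sequence
of length two; if `f ∉ p`, flatness makes it a regular sequence in `A_p`. If `f ∈ p` and `A_p`
is not Cohen–Macaulay, then `A_p ⧸ (f)` has depth zero, so `p` is one of the finitely many
associated primes of `A ⧸ (f)`.
-/

open IsLocalRing Module.associatedPrimes RingTheory.Sequence

open scoped Pointwise

section RegularSequences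

variable {R : Type*} [CommRing R]

theorem isRegSeq_get_of_isWeaklyRegular {I : Ideal R} {rs : List R} (hI : ∀ r ∈ rs, r ∈ I)
    (hrs : IsWeaklyRegular R rs) : IsRegSeq I rs.get := by
  refine ⟨fun i ↦ hI _ (rs.get_mem i), fun i x hx ↦ ?_⟩
  have hset : {y | ∃ j : Fin rs.length, j < i ∧ y = rs.get j} = {y | y ∈ rs.take i} := by
    ext y
    simp only [Set.mem_ofPred_eq, List.mem_take_iff_getElem]
    constructor
    · rintro ⟨j, hj, rfl⟩
      exact ⟨j, by omega, rfl⟩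
    · rintro ⟨j, hj, rfl⟩
      exact ⟨⟨j, by omega⟩, Fin.lt_def.2 (by simp only; omega), rfl⟩
  rw [hset] at hx ⊢
  have hreg := (isWeaklyRegular_iff_Fin R rs).1 hrs i
  rw [smul_eq_mul, Ideal.mul_top] at hreg
  exact (isSMulRegular_quotient_iff_mem_of_smul_mem _ _).1 hreg x hx

theorem isCohenMacaulayLocal_of_isWeaklyRegular [IsLocalRing R] {rs : List R}
    (hrs : IsWeaklyRegular R rs) (hmem : ∀ r ∈ rs, r ∈ maximalIdeal R)
    (hdim : ringKrullDim R = rs.length) : IsCohenMacaulayLocal R :=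
  ⟨rs.length, hdim, rs.get, isRegSeq_get_of_isWeaklyRegular hmem hrs⟩

theorem isWeaklyRegular_pair_iff {u v : R} :
    IsWeaklyRegular R [u, v] ↔ IsSMulRegular R u ∧ IsSMulRegular (R ⧸ Ideal.span {u}) v := by
  have hspan : u • (⊤ : Submodule R R) = Ideal.span {u} := by
    rw [← Submodule.ideal_span_singleton_smul, smul_eq_mul, Ideal.mul_top]
  rw [isWeaklyRegular_cons_iff, isWeaklyRegular_singleton_iff,
    (Submodule.quotEquivOfEq _ _ hspan).isSMulRegular_congr]

theorem isWeaklyRegular_pair_of_prime {u v : R} [IsDomain R] (hu : Prime u) (huv : ¬ u ∣ v) :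
    IsWeaklyRegular R [u, v] := by
  refine isWeaklyRegular_pair_iff.2 ⟨.of_ne_zero hu.ne_zero, ?_⟩
  rw [isSMulRegular_quotient_iff_mem_of_smul_mem]
  intro x hx
  rw [smul_eq_mul, Ideal.mem_span_singleton] at hx
  exact Ideal.mem_span_singleton.2 ((hu.dvd_or_dvd hx).resolve_left huv)

theorem exists_isWeaklyRegular_pair_of_not_isPrincipal [IsDomain R] [UniqueFactorizationMonoid R]
    {q : Ideal R} [hq : q.IsPrime] (hprinc : ¬ q.IsPrincipal) :
    ∃ u ∈ q, ∃ v ∈ q, IsWeaklyRegular R [u, v] := by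
  have hbot : q ≠ ⊥ := by
    rintro rfl
    exact hprinc inferInstance
  obtain ⟨u, huq, hu⟩ := hq.exists_mem_prime_of_ne_bot hbot
  obtain ⟨v, hvq, huv⟩ : ∃ v ∈ q, ¬ u ∣ v := by
    by_contra! hdvd
    exact hprinc ⟨u, le_antisymm (fun v hv ↦ Ideal.mem_span_singleton.2 (hdvd v hv))
      ((Ideal.span_singleton_le_iff_mem q).2 huq)⟩
  exact ⟨u, huq, v, hvq, isWeaklyRegular_pair_of_prime hu huv⟩

end RegularSequences

section LocalRings

theorem exists_isSMulRegular_mem_maximalIdeal {R M : Type*} [CommRing R] [IsLocalRing R]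
    [IsNoetherianRing R] [AddCommGroup M] [Module R M] [Module.Finite R M]
    (hM : maximalIdeal R ∉ associatedPrimes R M) : ∃ v ∈ maximalIdeal R, IsSMulRegular M v := by
  by_contra! hzero
  have hcover : (maximalIdeal R : Set R) ⊆ ⋃ q ∈ associatedPrimes R M, (q : Set R) := by
    rw [biUnion_associatedPrimes_eq_compl_regular]
    exact hzero
  obtain ⟨q, hq, hmq⟩ := (Ideal.subset_union_prime_finite (associatedPrimes.finite R M)
    (f := id) ⊥ ⊥ fun q hq _ _ ↦ hq.isPrime).1 hcover
  have := hq.isPrime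
  exact hM (hmq.antisymm (le_maximalIdeal_of_isPrime q) ▸ hq)

variable {S : Type*} [CommRing S] [IsDomain S] [IsLocalRing S]

theorem isCohenMacaulayLocal_of_ringKrullDim_le_one (hdim : ringKrullDim S ≤ 1) :
    IsCohenMacaulayLocal S := by
  by_cases hbot : maximalIdeal S = ⊥
  · exact isCohenMacaulayLocal_of_isWeaklyRegular (.nil S S) (by simp)
      (ringKrullDim_eq_zero_of_isField (isField_iff_maximalIdeal_eq.2 hbot))
  · obtain ⟨a, ham, ha⟩ := Submodule.exists_mem_ne_zero_of_ne_bot hbot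
    have hdim' : ringKrullDim S = 1 := by
      refine le_antisymm hdim ?_
      rw [← maximalIdeal_height_eq_ringKrullDim]
      exact_mod_cast Order.one_le_iff_ne_zero.2 (Ideal.height_eq_zero_iff_eq_bot.not.2 hbot)
    exact isCohenMacaulayLocal_of_isWeaklyRegular (rs := [a])
      ((isWeaklyRegular_singleton_iff S a).2 (.of_ne_zero ha)) (by simpa using ham) hdim'

theorem isCohenMacaulayLocal_of_maximalIdeal_notMem_associatedPrimes [IsNoetherianRing S]
    (hdim : ringKrullDim S = 2) {a : S} (ham : a ∈ maximalIdeal S) (ha : a ≠ 0)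
    (hass : maximalIdeal S ∉ associatedPrimes S (S ⧸ Ideal.span {a})) :
    IsCohenMacaulayLocal S := by
  obtain ⟨v, hvm, hv⟩ := exists_isSMulRegular_mem_maximalIdeal hass
  exact isCohenMacaulayLocal_of_isWeaklyRegular (rs := [a, v])
    (isWeaklyRegular_pair_iff.2 ⟨.of_ne_zero ha, hv⟩) (by simpa using ⟨ham, hvm⟩) hdim

end LocalRings

theorem mem_associatedPrimes_quotient_of_localization {A : Type*} [CommRing A]
    [IsNoetherianRing A] (p : Ideal A) [p.IsPrime] {I : Ideal A}
    (h : maximalIdeal (Localization.AtPrime p) ∈ associatedPrimes (Localization.AtPrime p)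
      (Localization.AtPrime p ⧸ I.map (algebraMap A (Localization.AtPrime p)))) :
    p ∈ associatedPrimes A (A ⧸ I) := by
  rw [← Ideal.localized'_eq_map _ p.primeCompl,
    ← preimage_comap_associatedPrimes_eq_associatedPrimes_of_isLocalizedModule
    p.primeCompl (Localization.AtPrime p) (Submodule.toLocalizedQuotient' (Localization.AtPrime p)
      p.primeCompl (Algebra.linearMap A (Localization.AtPrime p)) I), Set.mem_preimage] at h
  rwa [← Ideal.under_def, IsLocalization.AtPrime.under_maximalIdeal _ p] at h

theorem flat_localization_atPrime_of_flat_away {B A : Type*} [CommRing B] [CommRing A]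
    [Algebra B A] (a : A) (p : Ideal A) [p.IsPrime] (ha : a ∉ p)
    [Module.Flat B (Localization.Away a)] : Module.Flat B (Localization.AtPrime p) := by
  have hle : Submonoid.powers a ≤ p.primeCompl := Submonoid.powers_le.2 ha
  let : Algebra (Localization.Away a) (Localization.AtPrime p) :=
    IsLocalization.localizationAlgebraOfSubmonoidLe _ _ _ _ hle
  have : IsScalarTower A (Localization.Away a) (Localization.AtPrime p) :=
    IsLocalization.localization_isScalarTower_of_submonoid_le _ _ _ _ hle
  have : IsScalarTower B (Localization.Away a) (Localization.AtPrime p) := .to₁₃₄ B A _ _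
  have := IsLocalization.isLocalization_of_submonoid_le (Localization.Away a)
    (Localization.AtPrime p) _ _ hle
  have : Module.Flat (Localization.Away a) (Localization.AtPrime p) :=
    IsLocalization.flat _ (p.primeCompl.map (algebraMap A _))
  exact .trans B (Localization.Away a) _

theorem exists_flat_localization_away (B A : Type*) [CommRing B] [IsDomain B] [CommRing A]
    [Algebra B A] [Module.FinitePresentation B A] :
    ∃ f : B, f ≠ 0 ∧ Module.Flat B (Localization.Away (algebraMap B A f)) := by
  obtain ⟨f, hf, hfree, -⟩ := Module.FinitePresentation.exists_free_localizedModule_powers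
    (nonZeroDivisors B) (LocalizedModule.mkLinearMap (nonZeroDivisors B) A) (FractionRing B)
  refine ⟨f, nonZeroDivisors.ne_zero hf, ?_⟩
  have : IsLocalization (Algebra.algebraMapSubmonoid A (.powers f))
      (Localization.Away (algebraMap B A f)) := by
    rw [Algebra.algebraMapSubmonoid_powers]
    infer_instance
  have : Module.Flat B (LocalizedModule.Away f A) := .trans B (Localization.Away f) _
  exact .of_linearEquiv (IsLocalizedModule.iso (.powers f)
    (IsScalarTower.toAlgHom B A (Localization.Away (algebraMap B A f))).toLinearMap).symm

theorem isCohenMacaulayLocal_localization_of_flat {B A : Type*} [CommRing B] [IsDomain B]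
    [UniqueFactorizationMonoid B] [CommRing A] [IsNoetherianRing A] [Algebra B A]
    [Algebra.IsIntegral B A] (p : Ideal A) [p.IsPrime] [Module.Flat B (Localization.AtPrime p)]
    (hp : p.height = 2) : IsCohenMacaulayLocal (Localization.AtPrime p) := by
  have hprinc : ¬ (p.under B).IsPrincipal := by
    intro hprinc
    -- `p` is minimal over the extension of `p.under B`, contradicting Krull's height theorem.
    have hle := Ideal.height_le_one_of_isPrincipal_of_mem_minimalPrimes
      ((p.under B).map (algebraMap B A)) p (Ideal.IsIntegral.mem_minimalPrimes_map_under p)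
    rw [hp] at hle
    exact absurd hle (by decide)
  obtain ⟨u, hu, v, hv, huv⟩ := exists_isWeaklyRegular_pair_of_not_isPrincipal hprinc
  refine isCohenMacaulayLocal_of_isWeaklyRegular (huv.of_flat (S := Localization.AtPrime p)) ?_ ?_
  · rw [← IsLocalization.AtPrime.under_maximalIdeal (Localization.AtPrime p) p,
      Ideal.under_under] at hu hv
    simpa using ⟨hu, hv⟩
  · rw [IsLocalization.AtPrime.ringKrullDim_eq_height p, hp]
    rfl

section FinitelyManyPrimes

variable {A : Type*} [CommRing A] [IsDomain A]

theorem isCohenMacaulayLocal_localization_of_height_le_one {p : Ideal A} [p.IsPrime]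
    (hp : p.height ≤ 1) : IsCohenMacaulayLocal (Localization.AtPrime p) := by
  have := IsLocalization.isDomain_localization p.primeCompl_le_nonZeroDivisors
  refine isCohenMacaulayLocal_of_ringKrullDim_le_one ?_
  rw [IsLocalization.AtPrime.ringKrullDim_eq_height p]
  exact_mod_cast hp

theorem mem_associatedPrimes_of_not_isCohenMacaulayLocal [IsNoetherianRing A] {p : Ideal A}
    [p.IsPrime] (hp : p.height = 2) {a : A} (hap : a ∈ p) (ha : a ≠ 0)
    (hCM : ¬ IsCohenMacaulayLocal (Localization.AtPrime p)) :
    p ∈ associatedPrimes A (A ⧸ Ideal.span {a}) := by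
  have := IsLocalization.isDomain_localization p.primeCompl_le_nonZeroDivisors
  contrapose! hCM
  refine isCohenMacaulayLocal_of_maximalIdeal_notMem_associatedPrimes (a := algebraMap A _ a)
    ?_ ((IsLocalization.AtPrime.to_map_mem_maximal_iff _ p a).2 hap) ?_ ?_
  · rw [IsLocalization.AtPrime.ringKrullDim_eq_height p, hp]
    rfl
  · exact (map_ne_zero_iff _ (IsLocalization.injective _ p.primeCompl_le_nonZeroDivisors)).2 ha
  · rw [← Set.image_singleton, ← Ideal.map_span]
    exact mt (mem_associatedPrimes_quotient_of_localization p) hCM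

theorem finite_setOf_height_le_two_not_isCohenMacaulayLocal (B : Type*) [CommRing B] [IsDomain B]
    [UniqueFactorizationMonoid B] [IsNoetherianRing B] [Algebra B A] [FaithfulSMul B A]
    [Module.Finite B A] :
    {p : PrimeSpectrum A | p.asIdeal.height ≤ 2 ∧
      ¬ IsCohenMacaulayLocal (Localization.AtPrime p.asIdeal)}.Finite := by
  have : IsNoetherianRing A := IsNoetherianRing.of_finite B A
  have := Module.finitePresentation_of_finite B A
  obtain ⟨f, hf, hflat⟩ := exists_flat_localization_away B A
  refine ((associatedPrimes.finite A (A ⧸ Ideal.span {algebraMap B A f})).preimage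
    (f := PrimeSpectrum.asIdeal) (fun _ _ _ _ ↦ PrimeSpectrum.ext)).subset ?_
  rintro p ⟨hp, hCM⟩
  have hp2 : p.asIdeal.height = 2 := hp.eq_of_not_lt fun hlt ↦
    hCM (isCohenMacaulayLocal_localization_of_height_le_one (Order.le_of_lt_add_one hlt))
  refine mem_associatedPrimes_of_not_isCohenMacaulayLocal hp2 ?_ ?_ hCM
  · by_contra hfp
    have := flat_localization_atPrime_of_flat_away (B := B) _ p.asIdeal hfp
    exact hCM (isCohenMacaulayLocal_localization_of_flat (B := B) p.asIdeal hp2)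
  · exact (map_ne_zero_iff _ (FaithfulSMul.algebraMap_injective B A)).2 hf

end FinitelyManyPrimes

theorem statement18_general (k A : Type*) [Field k] [CommRing A] [IsDomain A] [Algebra k A]
    [Algebra.FiniteType k A] :
    {p : PrimeSpectrum A | p.asIdeal.height ≤ 2 ∧
      ¬ IsCohenMacaulayLocal (Localization.AtPrime p.asIdeal)}.Finite := by
  obtain ⟨n, φ, hinj, hfin⟩ := exists_finite_inj_algHom_of_fg k A
  let := φ.toRingHom.toAlgebra
  have : Module.Finite (MvPolynomial (Fin n) k) A := hfin
  have : FaithfulSMul (MvPolynomial (Fin n) k) A :=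
    (faithfulSMul_iff_algebraMap_injective _ _).2 hinj
  exact finite_setOf_height_le_two_not_isCohenMacaulayLocal (MvPolynomial (Fin n) k)

/-- If `A` is an integral domain, finitely generated over a field `k`
of characteristic zero, of Krull dimension `2`, then the set of primes `p` of `A` such
that the local ring `A_p` is not Cohen–Macaulay is finite. -/
theorem statement18 (k A : Type) [Field k] [CharZero k]
    [CommRing A] [IsDomain A] [Algebra k A]
    (hfg : Algebra.FiniteType k A) (hdim : ringKrullDim A = 2) :
    {p : PrimeSpectrum A |
      ¬ IsCohenMacaulayLocal (Localization.AtPrime p.asIdeal)}.Finite := by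
  refine (statement18_general k A).subset fun p hp ↦ ⟨WithBot.coe_le_coe.1 ?_, hp⟩
  exact (Ideal.height_le_ringKrullDim_of_ne_top p.isPrime.ne_top).trans_eq hdim
end
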